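/- arXiv:1602.07272 — 6 statements merged into one kernel-verified Lean document; each statement's English description precedes it below -/
import Mathlib

section
/- Let (Ω, F, P) be a probability space, let I = [a,b] ⊂ ℝ be a compact interval with a < b, and let X : I × Ω → ℝ^d be a jointly measurable stochastic process. Suppose that for Lebesgue-almost every u ∈ I one has liminf_{ε↓0} ε^{−d} ∫_I P(|X_s − X_u| ≤ ε) ds < ∞. Then for P-almost every ω, the occupation measure of the path s ↦ X_s(ω) on I is absolutely continuous with respect to d-dimensional Lebesgue measure on ℝ^d; i.e., the occupation density (local time) L(I, x) exists almost surely. -/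
open MeasureTheory Filter Topology

/-!
By Fubini and Fatou, the hypothesis says that almost surely, for almost every `u`, the occupation
measure `μ` of the path has finite lower `d`-density `liminf ε⁻ᵈ μ (closedBall x ε)` at `x = X u`;
hence it has finite lower density at `μ`-almost every point. For each `C`, the Besicovitch covering
theorem gives `μ A ≤ C * volume A` for every set `A` of points at which `μ` is at most `C * volume`
on arbitrarily small balls. Such sets, for `C ∈ ℕ`, cover `μ`-almost every point, so `μ` is
absolutely continuous. Restricting `ε` to powers of two changes the lower density by a factor of
at most `2ᵈ` and makes it measurable.
-/

open Metric ProbabilityTheory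
open scoped ENNReal

section LowerDensity

theorem exists_tendsto_atTop_two_inv_pow_le :
    ∃ n : ℝ → ℕ, Tendsto n (𝓝[>] 0) atTop ∧
      ∀ ε > 0, ε ≤ 1 → (2⁻¹ : ℝ) ^ n ε ≤ ε ∧ ε ≤ 2 * (2⁻¹ : ℝ) ^ n ε := by
  refine ⟨fun ε => ⌈Real.logb 2 ε⁻¹⌉₊, ?_, fun ε hε hε1 => ⟨?_, ?_⟩⟩
  · exact tendsto_nat_ceil_atTop.comp
      ((Real.tendsto_logb_atTop one_lt_two).comp tendsto_inv_nhdsGT_zero)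
  · rw [inv_pow, inv_le_comm₀ (by positivity) hε, ← Real.rpow_natCast,
      ← Real.logb_le_iff_le_rpow one_lt_two (by positivity)]
    exact Nat.le_ceil _
  · have hlog : 0 ≤ Real.logb 2 ε⁻¹ := Real.logb_nonneg one_lt_two ((one_le_inv₀ hε).2 hε1)
    have hpow : (2 : ℝ) ^ ⌈Real.logb 2 ε⁻¹⌉₊ ≤ 2 * ε⁻¹ := by
      rw [← Real.rpow_natCast, ← Real.le_logb_iff_rpow_le one_lt_two (by positivity),
        Real.logb_mul two_ne_zero (by positivity), Real.logb_self_eq_one one_lt_two, add_comm]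
      exact (Nat.ceil_lt_add_one hlog).le
    rw [inv_pow, ← div_eq_mul_inv, le_div_iff₀ (by positivity), ← le_div_iff₀' hε]
    simpa only [div_eq_mul_inv] using hpow

theorem div_ofReal_pow_le_of_le_two_mul {f : ℝ → ℝ≥0∞} (hf : Monotone f) (k : ℕ) {r ε : ℝ}
    (hr : 0 < r) (hrε : r ≤ ε) (hεr : ε ≤ 2 * r) :
    f r / ENNReal.ofReal (r ^ k) ≤ 2 ^ k * (f ε / ENNReal.ofReal (ε ^ k)) := by
  have hpow : ENNReal.ofReal (ε ^ k) ≤ 2 ^ k * ENNReal.ofReal (r ^ k) := by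
    calc ENNReal.ofReal (ε ^ k) ≤ ENNReal.ofReal ((2 * r) ^ k) := by gcongr; exact hr.le.trans hrε
      _ = 2 ^ k * ENNReal.ofReal (r ^ k) := by
        rw [mul_pow, ENNReal.ofReal_mul (by positivity), ENNReal.ofReal_pow zero_le_two,
          ENNReal.ofReal_ofNat]
  calc f r / ENNReal.ofReal (r ^ k)
      = 2 ^ k * f r / (2 ^ k * ENNReal.ofReal (r ^ k)) :=
        (ENNReal.mul_div_mul_left _ _ (by simp) (by simp)).symm
    _ ≤ 2 ^ k * f ε / ENNReal.ofReal (ε ^ k) := by gcongr; exact hf hrε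
    _ = 2 ^ k * (f ε / ENNReal.ofReal (ε ^ k)) := mul_div_assoc _ _ _

theorem liminf_two_inv_pow_div_le {f : ℝ → ℝ≥0∞} (hf : Monotone f) (k : ℕ) :
    liminf (fun n : ℕ => f (2⁻¹ ^ n) / ENNReal.ofReal ((2⁻¹ ^ n) ^ k)) atTop ≤
      2 ^ k * liminf (fun ε : ℝ => f ε / ENNReal.ofReal (ε ^ k)) (𝓝[>] 0) := by
  obtain ⟨n, hn, hnε⟩ := exists_tendsto_atTop_two_inv_pow_le
  have hle : ∀ᶠ ε : ℝ in 𝓝[>] 0, f (2⁻¹ ^ n ε) / ENNReal.ofReal ((2⁻¹ ^ n ε) ^ k) ≤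
      2 ^ k * (f ε / ENNReal.ofReal (ε ^ k)) := by
    filter_upwards [Ioc_mem_nhdsGT one_pos] with ε ⟨hε, hε1⟩
    exact div_ofReal_pow_le_of_le_two_mul hf k (by positivity) (hnε ε hε hε1).1 (hnε ε hε hε1).2
  rw [← ENNReal.liminf_const_mul_of_ne_top (by simp)]
  exact hn.liminf_le_liminf_comp.trans (liminf_le_liminf hle)

variable {E : Type*} [MeasurableSpace E]

/-- The lower `k`-dimensional density of `μ` at `x`, taken along closed balls of radius `2⁻¹ ^ n`.
Using only countably many radii makes it measurable in `x`; it exceeds the lower density over all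
radii by a factor of at most `2 ^ k`. -/
noncomputable def dyadicLowerDensity [PseudoMetricSpace E] (k : ℕ) (μ : Measure E) (x : E) :
    ℝ≥0∞ :=
  liminf (fun n : ℕ => μ (closedBall x (2⁻¹ ^ n)) / ENNReal.ofReal ((2⁻¹ ^ n) ^ k)) atTop

section Measurability

variable {α Ω : Type*} [MeasurableSpace α] [MeasurableSpace Ω] [PseudoMetricSpace E]
  [SecondCountableTopology E] [OpensMeasurableSpace E] {g : α → Ω} {f : α → E}

theorem measurable_kernel_closedBall (κ : Kernel Ω E) [IsSFiniteKernel κ] (hg : Measurable g)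
    (hf : Measurable f) (r : ℝ) : Measurable fun a => κ (g a) (closedBall (f a) r) := by
  have hs : MeasurableSet {q : α × E | dist q.2 (f q.1) ≤ r} :=
    measurableSet_le (by fun_prop) measurable_const
  exact Kernel.measurable_kernel_prodMk_left (κ := κ.comap g hg) hs

theorem measurable_dyadicLowerDensity_kernel (k : ℕ) (κ : Kernel Ω E) [IsSFiniteKernel κ]
    (hg : Measurable g) (hf : Measurable f) :
    Measurable fun a => dyadicLowerDensity k (κ (g a)) (f a) :=
  Measurable.liminf fun n => (measurable_kernel_closedBall κ hg hf (2⁻¹ ^ n)).div_const _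

end Measurability

theorem absolutelyContinuous_of_ae_frequently_measure_closedBall_le [MetricSpace E]
    [SecondCountableTopology E] [BorelSpace E] [HasBesicovitchCovering E]
    {μ ν : Measure E} [SFinite μ] [IsLocallyFiniteMeasure ν]
    (h : ∀ᵐ x ∂μ, ∃ C : ℕ, ∃ᶠ r in 𝓝[>] 0, μ (closedBall x r) ≤ C * ν (closedBall x r)) :
    μ ≪ ν := by
  intro A hA
  let S : ℕ → Set E := fun C => {x | ∃ᶠ r in 𝓝[>] 0, μ (closedBall x r) ≤ C * ν (closedBall x r)}
  have hcover : ∀ᵐ x ∂μ, x ∈ ⋃ C, S C := h.mono fun x hx => Set.mem_iUnion.2 hx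
  have hnull : ∀ C, μ (A ∩ S C) = 0 := fun C => by
    refine le_antisymm ?_ zero_le
    calc μ (A ∩ S C) ≤ ((C : NNReal) • ν) (A ∩ S C) :=
          (Besicovitch.vitaliFamily μ).measure_le_of_frequently_le _ .rfl _ fun x hx =>
            (Besicovitch.tendsto_filterAt μ x).frequently (by simpa [S] using hx.2)
      _ = 0 := by simp [measure_mono_null Set.inter_subset_left hA]
  calc μ A = μ (A ∩ ⋃ C, S C) := (measure_inter_conull hcover).symm
    _ = 0 := by rwa [Set.inter_iUnion, measure_iUnion_null_iff]

section Haar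

variable [NormedAddCommGroup E] [NormedSpace ℝ E] [FiniteDimensional ℝ E] [BorelSpace E]

theorem exists_frequently_measure_closedBall_le_of_dyadicLowerDensity_lt_top {μ : Measure E}
    (ν : Measure E) [ν.IsAddHaarMeasure] {x : E}
    (hx : dyadicLowerDensity (Module.finrank ℝ E) μ x < ⊤) :
    ∃ C : ℕ, ∃ᶠ r in 𝓝[>] 0, μ (closedBall x r) ≤ C * ν (closedBall x r) := by
  obtain ⟨D, hxD, hD⟩ := exists_between hx
  set v := ν (ball 0 1)
  have hv : v ≠ 0 := (measure_ball_pos ν 0 one_pos).ne'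
  obtain ⟨C, hC⟩ := ENNReal.exists_nat_gt (ENNReal.div_lt_top hD.ne hv).ne
  have hDC : D ≤ C * v := (ENNReal.div_le_iff hv measure_ball_lt_top.ne).1 hC.le
  have hradius : Tendsto (fun n : ℕ => (2⁻¹ : ℝ) ^ n) atTop (𝓝[>] 0) :=
    tendsto_pow_atTop_nhdsWithin_zero_of_lt_one (by norm_num) (by norm_num)
  refine ⟨C, hradius.frequently ((frequently_lt_of_liminf_lt isCobounded_ge_of_top hxD).mono ?_)⟩
  intro n hn
  have hr : (0 : ℝ) < 2⁻¹ ^ n := by positivity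
  calc μ (closedBall x (2⁻¹ ^ n))
      ≤ D * ENNReal.ofReal ((2⁻¹ ^ n) ^ Module.finrank ℝ E) :=
        (ENNReal.div_le_iff (ENNReal.ofReal_pos.2 (pow_pos hr _)).ne' ENNReal.ofReal_ne_top).1 hn.le
    _ ≤ C * v * ENNReal.ofReal ((2⁻¹ ^ n) ^ Module.finrank ℝ E) := by gcongr
    _ = C * ν (closedBall x (2⁻¹ ^ n)) := by
        rw [Measure.addHaar_closedBall ν x hr.le, mul_assoc, mul_comm v]

theorem absolutelyContinuous_of_ae_dyadicLowerDensity_lt_top {μ ν : Measure E} [SFinite μ]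
    [ν.IsAddHaarMeasure] (h : ∀ᵐ x ∂μ, dyadicLowerDensity (Module.finrank ℝ E) μ x < ⊤) :
    μ ≪ ν :=
  absolutelyContinuous_of_ae_frequently_measure_closedBall_le <| h.mono fun _ =>
    exists_frequently_measure_closedBall_le_of_dyadicLowerDensity_lt_top ν

end Haar

end LowerDensity

section Occupation

variable {Ω T E : Type*} [MeasurableSpace Ω] [MeasurableSpace T] [MeasurableSpace E]
  {X : T → Ω → E}

/-- The occupation measures `ν.map (X · ω)` of the paths of a process `X`, as a kernel in `ω`.
It is built as a pushforward of `ν ⊗ δ_ω` so that measurability in `ω` and s-finiteness are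
inherited from the kernel operations; it is the zero kernel if `X` is not jointly measurable or `ν`
is not s-finite. -/
noncomputable def occupationKernel (X : T → Ω → E) (ν : Measure T) : Kernel Ω E :=
  (Kernel.const Ω ν ×ₖ Kernel.id).map (Function.uncurry X)

instance (X : T → Ω → E) (ν : Measure T) : IsSFiniteKernel (occupationKernel X ν) :=
  inferInstanceAs (IsSFiniteKernel ((Kernel.const Ω ν ×ₖ Kernel.id).map (Function.uncurry X)))

theorem occupationKernel_apply (hX : Measurable (Function.uncurry X)) (ν : Measure T) [SFinite ν]
    (ω : Ω) : occupationKernel X ν ω = ν.map (X · ω) := by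
  rw [occupationKernel, Kernel.map_apply _ hX, Kernel.prod_apply, Kernel.const_apply,
    Kernel.id_apply, Measure.prod_dirac, Measure.map_map hX measurable_prodMk_right]
  rfl

variable [PseudoMetricSpace E] [SecondCountableTopology E] [OpensMeasurableSpace E]
  {Z : Ω → E} (P : Measure Ω) [SFinite P] (ν : Measure T) [SFinite ν]

theorem lintegral_measure_dist_le_eq_lintegral_occupationKernel
    (hX : Measurable (Function.uncurry X)) (hZ : Measurable Z) (ε : ℝ) :
    ∫⁻ s, P {ω | dist (X s ω) (Z ω) ≤ ε} ∂ν =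
      ∫⁻ ω, occupationKernel X ν ω (closedBall (Z ω) ε) ∂P := by
  have hclose : MeasurableSet {p : T × Ω | dist (X p.1 p.2) (Z p.2) ≤ ε} :=
    measurableSet_le (hX.dist (hZ.comp measurable_snd)) measurable_const
  calc ∫⁻ s, P {ω | dist (X s ω) (Z ω) ≤ ε} ∂ν
      = ∫⁻ ω, ν {s | dist (X s ω) (Z ω) ≤ ε} ∂P :=
        (Measure.prod_apply hclose).symm.trans (Measure.prod_apply_symm hclose)
    _ = ∫⁻ ω, occupationKernel X ν ω (closedBall (Z ω) ε) ∂P := by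
        congr with ω
        rw [occupationKernel_apply hX,
          Measure.map_apply hX.of_uncurry_right measurableSet_closedBall]
        rfl

theorem lintegral_dyadicLowerDensity_occupationKernel_le (k : ℕ)
    (hX : Measurable (Function.uncurry X)) (hZ : Measurable Z) :
    ∫⁻ ω, dyadicLowerDensity k (occupationKernel X ν ω) (Z ω) ∂P ≤
      2 ^ k * liminf (fun ε : ℝ =>
        (∫⁻ s, P {ω | dist (X s ω) (Z ω) ≤ ε} ∂ν) / ENNReal.ofReal (ε ^ k)) (𝓝[>] 0) := by
  have hball (r : ℝ) : Measurable fun ω => occupationKernel X ν ω (closedBall (Z ω) r) :=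
    measurable_kernel_closedBall _ measurable_id hZ r
  have hmono : Monotone fun ε : ℝ => ∫⁻ s, P {ω | dist (X s ω) (Z ω) ≤ ε} ∂ν :=
    fun _ _ h => lintegral_mono fun _ => measure_mono fun _ hω => le_trans hω h
  refine (lintegral_liminf_le fun n => (hball (2⁻¹ ^ n)).div_const _).trans ?_
  refine le_of_eq_of_le ?_ (liminf_two_inv_pow_div_le hmono k)
  congr with n
  simp only [lintegral_measure_dist_le_eq_lintegral_occupationKernel P ν hX hZ,
    div_eq_mul_inv, lintegral_mul_const _ (hball _)]

theorem ae_ae_dyadicLowerDensity_occupationKernel_lt_top (k : ℕ)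
    (hX : Measurable (Function.uncurry X))
    (h : ∀ᵐ u ∂ν, liminf (fun ε : ℝ =>
      (∫⁻ s, P {ω | dist (X s ω) (X u ω) ≤ ε} ∂ν) / ENNReal.ofReal (ε ^ k)) (𝓝[>] 0) < ⊤) :
    ∀ᵐ ω ∂P, ∀ᵐ x ∂occupationKernel X ν ω,
      dyadicLowerDensity k (occupationKernel X ν ω) x < ⊤ := by
  have htime : ∀ᵐ u ∂ν, ∀ᵐ ω ∂P,
      dyadicLowerDensity k (occupationKernel X ν ω) (X u ω) < ⊤ := by
    filter_upwards [h] with u hu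
    have hXu : Measurable (X u) := hX.of_uncurry_left
    have hbound := lintegral_dyadicLowerDensity_occupationKernel_le P ν k hX hXu
    exact ae_lt_top (measurable_dyadicLowerDensity_kernel k _ measurable_id hXu)
      (hbound.trans_lt (ENNReal.mul_lt_top (by simp) hu)).ne
  have hfinite : MeasurableSet {p : T × Ω |
      dyadicLowerDensity k (occupationKernel X ν p.2) (X p.1 p.2) < ⊤} :=
    measurableSet_lt (measurable_dyadicLowerDensity_kernel k _ measurable_snd hX) measurable_const
  filter_upwards [(Measure.ae_ae_comm hfinite).1 htime] with ω hω
  have hfiniteω : MeasurableSet {x | dyadicLowerDensity k (occupationKernel X ν ω) x < ⊤} :=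
    measurableSet_lt (measurable_dyadicLowerDensity_kernel k _ (measurable_const (a := ω))
      measurable_id) measurable_const
  rw [occupationKernel_apply hX] at hω hfiniteω ⊢
  exact (ae_map_iff hX.of_uncurry_right.aemeasurable hfiniteω).2 hω

end Occupation

theorem stmt_0_general {Ω T E : Type*} [MeasurableSpace Ω] [MeasurableSpace T]
    [NormedAddCommGroup E] [NormedSpace ℝ E] [FiniteDimensional ℝ E] [MeasurableSpace E]
    [BorelSpace E] (P : Measure Ω) [SFinite P] (ν : Measure T) [SFinite ν]
    (vol : Measure E) [vol.IsAddHaarMeasure] {X : T → Ω → E}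
    (hX : Measurable (Function.uncurry X))
    (hliminf : ∀ᵐ u ∂ν, liminf (fun ε : ℝ =>
      (∫⁻ s, P {ω | ‖X s ω - X u ω‖ ≤ ε} ∂ν) / ENNReal.ofReal (ε ^ Module.finrank ℝ E))
      (𝓝[>] 0) < ⊤) :
    ∀ᵐ ω ∂P, ν.map (fun s => X s ω) ≪ vol := by
  simp only [← dist_eq_norm] at hliminf
  filter_upwards [ae_ae_dyadicLowerDensity_occupationKernel_lt_top P ν _ hX hliminf] with ω hω
  rw [← occupationKernel_apply hX]
  exact absolutelyContinuous_of_ae_dyadicLowerDensity_lt_top hω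

/-- Existence of the occupation density (local time): if for a.e. `u ∈ [a,b]` the
liminf condition `liminf_{ε↓0} ε^{-d} ∫_I P(|X_s - X_u| ≤ ε) ds < ∞` holds, then
almost surely the occupation measure of the path `s ↦ X s ω` on `[a,b]` is
absolutely continuous with respect to Lebesgue measure on `ℝ^d`. -/
theorem stmt_0
    {Ω : Type*} [MeasurableSpace Ω] (P : Measure Ω) [IsProbabilityMeasure P]
    (d : ℕ) (a b : ℝ) (hab : a < b)
    (X : ℝ → Ω → EuclideanSpace ℝ (Fin d))
    (hX : Measurable (Function.uncurry X))
    (hliminf : ∀ᵐ u ∂(volume.restrict (Set.Icc a b)),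
      Filter.liminf
        (fun ε : ℝ =>
          (∫⁻ s in Set.Icc a b, P {ω | ‖X s ω - X u ω‖ ≤ ε}) / ENNReal.ofReal (ε ^ d))
        (𝓝[>] (0 : ℝ)) < ⊤) :
    ∀ᵐ ω ∂P,
      (Measure.map (fun s => X s ω) (volume.restrict (Set.Icc a b))).AbsolutelyContinuous
        (volume : Measure (EuclideanSpace ℝ (Fin d))) := by
  exact stmt_0_general P _ volume hX (by simpa only [finrank_euclideanSpace_fin] using hliminf)
end

section
/- Let H ∈ (0,1), T > 0, and let B : [0,T] × Ω → ℝ be a stochastic process on a probability space (Ω, F, P) such that for all 0 ≤ s ≤ t ≤ T, the law of the increment B_t − B_s is the real Gaussian measure with mean 0 and variance (t−s)^{2H}. Then for every γ ∈ (0, H) there exists a modification B̃ of B (i.e., for each t ∈ [0,T], B̃_t = B_t P-almost surely) all of whose sample paths are γ-Hölder continuous on [0,T]. -/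
open MeasureTheory ProbabilityTheory Set

/-!
The increments satisfy the Kolmogorov condition: `E |B_t - B_s| ^ p = c_p |t - s| ^ (H p)` with
`c_p` the `p`-th absolute moment of a standard Gaussian. For `p > 1 / (H - γ)` the `p`-th powers of
the increments over the `2 ^ n` dyadic cells of generation `n`, rescaled by `2 ^ (n γ p)`, have
summable expectations, so almost surely all these increments are bounded by `K 2 ^ (-n γ)` with a
random constant `K`. On this event, chaining along the dyadic floors of `t` makes the path converge
to a `γ`-Hölder limit, which equals `B_t` almost surely for each fixed `t`. Off it, a constant path
is used.
-/

open Filter Topology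
open scoped ENNReal NNReal unitInterval

/-- The point `k / 2 ^ n` of the unit interval; indices `k > 2 ^ n` are sent to `1`. -/
noncomputable def dyadicPoint (n k : ℕ) : I := projIcc 0 1 zero_le_one ((k : ℝ) / 2 ^ n)

/-- The largest point of the `n`-th dyadic grid that is at most `t`. -/
noncomputable def dyadicFloor (n : ℕ) (t : I) : I := dyadicPoint n ⌊(t : ℝ) * 2 ^ n⌋₊

lemma dyadicPoint_succ_two_mul (n k : ℕ) : dyadicPoint (n + 1) (2 * k) = dyadicPoint n k := by
  unfold dyadicPoint
  congr 1
  push_cast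
  rw [pow_succ', mul_div_mul_left _ _ two_ne_zero]

lemma ofReal_inv_two_pow (n : ℕ) : ENNReal.ofReal (2⁻¹ ^ n) = 2⁻¹ ^ n := by
  rw [ENNReal.ofReal_pow (by positivity), ENNReal.ofReal_inv_of_pos two_pos, ENNReal.ofReal_ofNat]

lemma edist_dyadicPoint_succ_le (n k : ℕ) :
    edist (dyadicPoint n k) (dyadicPoint n (k + 1)) ≤ 2⁻¹ ^ n := by
  refine ((LipschitzWith.projIcc zero_le_one).edist_le_mul _ _).trans_eq ?_
  have hdist : dist ((k : ℝ) / 2 ^ n) ((k + 1 : ℕ) / 2 ^ n) = 2⁻¹ ^ n := by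
    rw [dist_comm, Real.dist_eq, ← sub_div]
    simp
  rw [edist_dist, hdist, ofReal_inv_two_pow, ENNReal.coe_one, one_mul]

lemma floor_mul_two_pow_le (n : ℕ) (t : I) : ⌊(t : ℝ) * 2 ^ n⌋₊ ≤ 2 ^ n :=
  Nat.floor_le_of_le (by push_cast; exact mul_le_of_le_one_left (by positivity) t.2.2)

lemma coe_dyadicFloor (n : ℕ) (t : I) :
    (dyadicFloor n t : ℝ) = ⌊(t : ℝ) * 2 ^ n⌋₊ / 2 ^ n := by
  have hle : (⌊(t : ℝ) * 2 ^ n⌋₊ : ℝ) ≤ 2 ^ n := mod_cast floor_mul_two_pow_le n t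
  unfold dyadicFloor dyadicPoint
  rw [projIcc_of_mem _ ⟨by positivity, div_le_one_of_le₀ hle (by positivity)⟩]

lemma edist_dyadicFloor_self_le (n : ℕ) (t : I) : edist (dyadicFloor n t) t ≤ 2⁻¹ ^ n := by
  have hpow : (0 : ℝ) < 2 ^ n := by positivity
  have hfloor := Nat.floor_le (mul_nonneg t.2.1 hpow.le)
  have hlt := Nat.lt_floor_add_one ((t : ℝ) * 2 ^ n)
  rw [edist_comm, edist_dist, Subtype.dist_eq, Real.dist_eq, coe_dyadicFloor, ← ofReal_inv_two_pow,
    inv_pow, abs_of_nonneg (sub_nonneg.2 ((div_le_iff₀ hpow).2 hfloor))]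
  refine ENNReal.ofReal_le_ofReal ?_
  rw [sub_le_iff_le_add, inv_eq_one_div, ← add_div, le_div_iff₀ hpow]
  linarith

lemma floor_mul_two_pow_eq_div_two (n : ℕ) (t : ℝ) :
    ⌊t * 2 ^ n⌋₊ = ⌊t * 2 ^ (n + 1)⌋₊ / 2 := by
  rw [← Nat.floor_div_natCast, pow_succ, ← mul_assoc, Nat.cast_ofNat,
    mul_div_cancel_right₀ _ two_ne_zero]

lemma floor_mul_two_pow_eq_or_eq_succ {n : ℕ} {s t : I} (hst : s ≤ t)
    (h : edist s t ≤ 2⁻¹ ^ n) :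
    ⌊(t : ℝ) * 2 ^ n⌋₊ = ⌊(s : ℝ) * 2 ^ n⌋₊ ∨ ⌊(t : ℝ) * 2 ^ n⌋₊ = ⌊(s : ℝ) * 2 ^ n⌋₊ + 1 := by
  have hs : (0 : ℝ) ≤ s * 2 ^ n := mul_nonneg s.2.1 (by positivity)
  have hsub : (t : ℝ) - s ≤ 2⁻¹ ^ n := by
    rw [← ofReal_inv_two_pow, edist_comm, edist_dist, ENNReal.ofReal_le_ofReal_iff (by positivity)]
      at h
    exact (le_abs_self _).trans h
  have hle : (t : ℝ) * 2 ^ n ≤ s * 2 ^ n + 1 := by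
    calc (t : ℝ) * 2 ^ n ≤ (s + 2⁻¹ ^ n) * 2 ^ n := by gcongr; linarith
      _ = s * 2 ^ n + 1 := by rw [add_mul, ← mul_pow]; norm_num
  have hlower : ⌊(s : ℝ) * 2 ^ n⌋₊ ≤ ⌊(t : ℝ) * 2 ^ n⌋₊ :=
    Nat.floor_le_floor (mul_le_mul_of_nonneg_right hst (by positivity))
  have hupper := Nat.floor_le_floor hle
  rw [Nat.floor_add_one hs] at hupper
  omega

lemma exists_edist_near_inv_two_pow {s t : I} (hst : s ≠ t) :
    ∃ n : ℕ, 2⁻¹ ^ (n + 1) ≤ edist s t ∧ edist s t ≤ 2⁻¹ ^ n := by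
  have hle : dist s t ≤ 1 := Real.dist_le_of_mem_Icc_01 s.2 t.2
  obtain ⟨n, hlt, hle⟩ := exists_nat_pow_near_of_lt_one (dist_pos.2 hst) hle
    (inv_pos.2 (two_pos (α := ℝ))) (by norm_num)
  refine ⟨n, ?_, ?_⟩ <;> rw [edist_dist, ← ofReal_inv_two_pow]
  exacts [ENNReal.ofReal_le_ofReal hlt.le, ENNReal.ofReal_le_ofReal hle]

section Chaining

variable {E : Type*} [PseudoEMetricSpace E] {f : I → E} {K r : ℝ≥0∞}

/-- The increments of `f` over the cells of the `n`-th dyadic grid are at most `K * r ^ n`, for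
every `n`. For `r = 2 ^ (-γ)` this is `γ`-Hölder continuity tested on neighbouring dyadic points. -/
def DyadicIncrementBound (f : I → E) (K r : ℝ≥0∞) : Prop :=
  ∀ n, ∀ k < 2 ^ n, edist (f (dyadicPoint n k)) (f (dyadicPoint n (k + 1))) ≤ K * r ^ n

namespace DyadicIncrementBound

lemma edist_dyadicFloor_succ_le (hf : DyadicIncrementBound f K r) (n : ℕ) (t : I) :
    edist (f (dyadicFloor n t)) (f (dyadicFloor (n + 1) t)) ≤ K * r * r ^ n := by
  have hle := floor_mul_two_pow_le (n + 1) t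
  unfold dyadicFloor
  rw [floor_mul_two_pow_eq_div_two n, ← dyadicPoint_succ_two_mul]
  generalize ⌊(t : ℝ) * 2 ^ (n + 1)⌋₊ = m at hle ⊢
  obtain heven | hodd : m = 2 * (m / 2) ∨ m = 2 * (m / 2) + 1 := by omega
  · rw [← heven, edist_self]
    exact zero_le
  · have hstep := hf (n + 1) (2 * (m / 2)) (by omega)
    rwa [← hodd, pow_succ', ← mul_assoc] at hstep

lemma edist_dyadicFloor_le (hf : DyadicIncrementBound f K r) {n : ℕ} {s t : I}
    (hst : edist s t ≤ 2⁻¹ ^ n) :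
    edist (f (dyadicFloor n s)) (f (dyadicFloor n t)) ≤ K * r ^ n := by
  wlog hle : s ≤ t generalizing s t
  · rw [edist_comm] at hst ⊢
    exact this hst (le_of_not_ge hle)
  have hlt := floor_mul_two_pow_le n t
  unfold dyadicFloor
  rcases floor_mul_two_pow_eq_or_eq_succ hle hst with heq | heq
  · rw [heq, edist_self]
    exact zero_le
  · rw [heq] at hlt ⊢
    exact hf n _ hlt

lemma edist_le_of_tendsto (hf : DyadicIncrementBound f K r) {g : I → E}
    (hg : ∀ t, Tendsto (fun n ↦ f (dyadicFloor n t)) atTop (𝓝 (g t))) {n : ℕ} {s t : I}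
    (hst : edist s t ≤ 2⁻¹ ^ n) :
    edist (g s) (g t) ≤ (2 * (K * r / (1 - r)) + K) * r ^ n := by
  have htail (u : I) : edist (f (dyadicFloor n u)) (g u) ≤ K * r / (1 - r) * r ^ n :=
    (edist_le_of_edist_le_geometric_of_tendsto r (K * r)
      (hf.edist_dyadicFloor_succ_le · u) (hg u) n).trans_eq ENNReal.mul_div_right_comm
  calc edist (g s) (g t)
      ≤ edist (g s) (f (dyadicFloor n s)) + edist (f (dyadicFloor n s)) (f (dyadicFloor n t))
        + edist (f (dyadicFloor n t)) (g t) := edist_triangle4 _ _ _ _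
    _ ≤ K * r / (1 - r) * r ^ n + K * r ^ n + K * r / (1 - r) * r ^ n := by
        gcongr
        · exact edist_comm (g s) _ ▸ htail s
        · exact hf.edist_dyadicFloor_le hst
        · exact htail t
    _ = (2 * (K * r / (1 - r)) + K) * r ^ n := by ring

theorem exists_holderWith_tendsto [CompleteSpace E] {γ : ℝ≥0} (hγ : 0 < γ) (hK : K ≠ ∞)
    (hf : DyadicIncrementBound f K (2⁻¹ ^ (γ : ℝ))) :
    ∃ g : I → E, (∃ C, HolderWith C γ g) ∧
      ∀ t, Tendsto (fun n ↦ f (dyadicFloor n t)) atTop (𝓝 (g t)) := by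
  set r : ℝ≥0∞ := 2⁻¹ ^ (γ : ℝ)
  have hr : r < 1 := ENNReal.rpow_lt_one (by simp) (mod_cast hγ)
  have hr0 : r ≠ 0 := by simp [r]
  have hcauchy (t : I) : CauchySeq fun n ↦ f (dyadicFloor n t) :=
    cauchySeq_of_edist_le_geometric r (K * r) hr (by finiteness) (hf.edist_dyadicFloor_succ_le · t)
  choose g hg using fun t ↦ cauchySeq_tendsto_of_complete (hcauchy t)
  set D : ℝ≥0∞ := (2 * (K * r / (1 - r)) + K) / r
  have hD : D ≠ ∞ := by finiteness [(tsub_pos_iff_lt.2 hr).ne']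
  refine ⟨g, ⟨D.toNNReal, fun s t ↦ ?_⟩, hg⟩
  rw [ENNReal.coe_toNNReal hD]
  rcases eq_or_ne s t with rfl | hst
  · simp
  obtain ⟨n, hlower, hupper⟩ := exists_edist_near_inv_two_pow hst
  calc edist (g s) (g t) ≤ (2 * (K * r / (1 - r)) + K) * r ^ n := hf.edist_le_of_tendsto hg hupper
    _ = D * r ^ (n + 1) := by
        rw [pow_succ', ← mul_assoc, ENNReal.div_mul_cancel hr0 (by finiteness)]
    _ = D * (2⁻¹ ^ (n + 1)) ^ (γ : ℝ) := by
        simp_rw [r, ← ENNReal.rpow_natCast, ← ENNReal.rpow_mul, mul_comm]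
    _ ≤ D * edist s t ^ (γ : ℝ) := by gcongr

end DyadicIncrementBound
end Chaining

section Kolmogorov

variable {Ω S E : Type*} [MeasurableSpace Ω] {P : Measure Ω}

lemma ae_tsum_ne_top_of_lintegral_le_geometric {Y : ℕ → Ω → ℝ≥0∞}
    (hY : ∀ n, AEMeasurable (Y n) P) {C ρ : ℝ≥0∞} (hC : C ≠ ∞) (hρ : ρ < 1)
    (hle : ∀ n, ∫⁻ ω, Y n ω ∂P ≤ C * ρ ^ n) : ∀ᵐ ω ∂P, ∑' n, Y n ω ≠ ∞ := by
  have hsum : ∑' n, C * ρ ^ n ≠ ∞ := by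
    rw [ENNReal.tsum_mul_left, ENNReal.tsum_geometric]
    finiteness [(tsub_pos_iff_lt.2 hρ).ne']
  have hint : ∫⁻ ω, ∑' n, Y n ω ∂P ≠ ∞ := by
    rw [lintegral_tsum hY]
    exact ne_top_of_le_ne_top hsum (ENNReal.tsum_le_tsum hle)
  filter_upwards [ae_lt_top' (AEMeasurable.tsum hY) hint] with ω hω using hω.ne

variable {p q : ℝ} {M : ℝ≥0}

section PseudoEMetricSpace

variable [PseudoEMetricSpace S] [PseudoEMetricSpace E]

lemma isAEKolmogorovProcess_of_aemeasurable [SecondCountableTopology E] [MeasurableSpace E]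
    [BorelSpace E] {X : S → Ω → E} (hmeas : ∀ t, AEMeasurable (X t) P)
    (hle : ∀ s t, ∫⁻ ω, edist (X s ω) (X t ω) ^ p ∂P ≤ M * edist s t ^ q)
    (hp : 0 < p) (hq : 0 < q) : IsAEKolmogorovProcess X P p q M := by
  refine ⟨fun t ↦ (hmeas t).mk, ?_, fun t ↦ (hmeas t).ae_eq_mk⟩
  refine .mk_of_secondCountableTopology (fun t ↦ (hmeas t).measurable_mk) (fun s t ↦ ?_) hp hq
  refine (lintegral_congr_ae ?_).trans_le (hle s t)
  filter_upwards [(hmeas s).ae_eq_mk, (hmeas t).ae_eq_mk] with ω hs ht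
  rw [hs, ht]

lemma isAEKolmogorovProcess_comp_lipschitzWith {S' : Type*} [PseudoEMetricSpace S']
    {X : S → Ω → E} (hX : IsAEKolmogorovProcess X P p q M) {L : ℝ≥0} {φ : S' → S}
    (hφ : LipschitzWith L φ) :
    IsAEKolmogorovProcess (fun t ↦ X (φ t)) P p q (M * L ^ q) := by
  obtain ⟨Y, hY, hXY⟩ := hX
  refine ⟨fun t ↦ Y (φ t), ⟨fun s t ↦ hY.measurablePair _ _, fun s t ↦ ?_, hY.p_pos, hY.q_pos⟩,
    fun t ↦ hXY (φ t)⟩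
  calc ∫⁻ ω, edist (Y (φ s) ω) (Y (φ t) ω) ^ p ∂P ≤ M * edist (φ s) (φ t) ^ q :=
        hY.kolmogorovCondition _ _
    _ ≤ M * (L * edist s t) ^ q := by
        gcongr
        exacts [hY.q_pos.le, hφ s t]
    _ = ↑(M * L ^ q) * edist s t ^ q := by
        rw [ENNReal.mul_rpow_of_nonneg _ _ hY.q_pos.le, ENNReal.coe_mul,
          ENNReal.coe_rpow_of_nonneg _ hY.q_pos.le, mul_assoc]

lemma ae_tendsto_of_edist_le_geometric {X : S → Ω → E} (hX : IsAEKolmogorovProcess X P p q M)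
    {ρ : ℝ≥0∞} (hρ : ρ < 1) {u : ℕ → S} {t : S} (hu : ∀ n, edist (u n) t ≤ ρ ^ n) :
    ∀ᵐ ω ∂P, Tendsto (fun n ↦ X (u n) ω) atTop (𝓝 (X t ω)) := by
  have hle (n : ℕ) : ∫⁻ ω, edist (X (u n) ω) (X t ω) ^ p ∂P ≤ M * (ρ ^ q) ^ n := by
    calc ∫⁻ ω, edist (X (u n) ω) (X t ω) ^ p ∂P ≤ M * edist (u n) t ^ q :=
          hX.kolmogorovCondition _ _
      _ ≤ M * (ρ ^ n) ^ q := by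
          gcongr
          exacts [hX.q_pos.le, hu n]
      _ = M * (ρ ^ q) ^ n := by simp_rw [← ENNReal.rpow_natCast, ← ENNReal.rpow_mul, mul_comm]
  filter_upwards [ae_tsum_ne_top_of_lintegral_le_geometric
    (fun n ↦ hX.aemeasurable_edist.pow_const p) ENNReal.coe_ne_top
    (ENNReal.rpow_lt_one hρ hX.q_pos) hle] with ω hω
  have hzero := (ENNReal.tendsto_atTop_zero_of_tsum_ne_top hω).ennrpow_const p⁻¹
  simp_rw [ENNReal.rpow_rpow_inv hX.p_pos.ne', ENNReal.zero_rpow_of_pos (inv_pos.2 hX.p_pos)]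
    at hzero
  exact tendsto_iff_edist_tendsto_0.2 hzero

lemma lintegral_sum_edist_dyadicPoint_rpow_le {X : I → Ω → E}
    (hX : IsAEKolmogorovProcess X P p q M) (n : ℕ) :
    ∫⁻ ω, ∑ k ∈ Finset.range (2 ^ n),
      edist (X (dyadicPoint n k) ω) (X (dyadicPoint n (k + 1)) ω) ^ p ∂P
      ≤ M * (2 * 2⁻¹ ^ q) ^ n := by
  rw [lintegral_finsetSum' _ fun k _ ↦ hX.aemeasurable_edist.pow_const p]
  calc ∑ k ∈ Finset.range (2 ^ n),
        ∫⁻ ω, edist (X (dyadicPoint n k) ω) (X (dyadicPoint n (k + 1)) ω) ^ p ∂P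
      ≤ ∑ k ∈ Finset.range (2 ^ n), (M : ℝ≥0∞) * (2⁻¹ ^ n) ^ q := by
        refine Finset.sum_le_sum fun k _ ↦ (hX.kolmogorovCondition _ _).trans ?_
        gcongr
        exacts [hX.q_pos.le, edist_dyadicPoint_succ_le n k]
    _ = 2 ^ n * (M * (2⁻¹ ^ q) ^ n) := by
        simp_rw [Finset.sum_const, Finset.card_range, nsmul_eq_mul, Nat.cast_pow, Nat.cast_ofNat,
          ← ENNReal.rpow_natCast, ← ENNReal.rpow_mul, mul_comm q]
    _ = M * (2 * 2⁻¹ ^ q) ^ n := by rw [mul_pow, mul_left_comm]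

lemma ae_exists_dyadicIncrementBound {X : I → Ω → E} (hX : IsAEKolmogorovProcess X P p q M)
    {γ : ℝ} (hγ : γ * p + 1 < q) :
    ∀ᵐ ω ∂P, ∃ K ≠ ∞, DyadicIncrementBound (X · ω) K (2⁻¹ ^ γ) := by
  have hratio : (2 : ℝ≥0∞) ^ (γ * p) * (2 * 2⁻¹ ^ q) < 1 := by
    calc (2 : ℝ≥0∞) ^ (γ * p) * (2 * 2⁻¹ ^ q) = 2 ^ (γ * p + (1 + -q)) := by
          rw [ENNReal.rpow_add _ _ two_ne_zero (by simp),
            ENNReal.rpow_add _ _ two_ne_zero (by simp),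
            ENNReal.rpow_one, ENNReal.rpow_neg, ENNReal.inv_rpow]
      _ < 1 := ENNReal.rpow_lt_one_of_one_lt_of_neg (by norm_num) (by linarith)
  let V (n : ℕ) (ω : Ω) : ℝ≥0∞ := ∑ k ∈ Finset.range (2 ^ n),
    edist (X (dyadicPoint n k) ω) (X (dyadicPoint n (k + 1)) ω) ^ p
  have hV (n : ℕ) : AEMeasurable (V n) P :=
    Finset.aemeasurable_fun_sum _ fun k _ ↦ hX.aemeasurable_edist.pow_const p
  have hle (n : ℕ) : ∫⁻ ω, (2 ^ (γ * p)) ^ n * V n ω ∂P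
      ≤ M * (2 ^ (γ * p) * (2 * 2⁻¹ ^ q)) ^ n := by
    rw [lintegral_const_mul'' _ (hV n), mul_pow (2 ^ (γ * p)), mul_left_comm]
    gcongr
    exact lintegral_sum_edist_dyadicPoint_rpow_le hX n
  filter_upwards [ae_tsum_ne_top_of_lintegral_le_geometric (fun n ↦ (hV n).const_mul _)
    ENNReal.coe_ne_top hratio hle] with ω hω
  set W := ∑' n, (2 ^ (γ * p)) ^ n * V n ω
  refine ⟨W ^ p⁻¹, by finiteness [inv_nonneg.2 hX.p_pos.le], fun n k hk ↦ ?_⟩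
  rw [← ENNReal.rpow_le_rpow_iff hX.p_pos]
  calc edist (X (dyadicPoint n k) ω) (X (dyadicPoint n (k + 1)) ω) ^ p ≤ V n ω :=
        Finset.single_le_sum
          (f := fun k ↦ edist (X (dyadicPoint n k) ω) (X (dyadicPoint n (k + 1)) ω) ^ p)
          (fun _ _ ↦ zero_le) (Finset.mem_range.2 hk)
    _ ≤ W * (2⁻¹ ^ (γ * p)) ^ n := by
        rw [ENNReal.inv_rpow, ← ENNReal.inv_pow, ← div_eq_mul_inv,
          ENNReal.le_div_iff_mul_le (by simp) (by simp), mul_comm]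
        exact ENNReal.le_tsum (f := fun n ↦ (2 ^ (γ * p)) ^ n * V n ω) n
    _ = (W ^ p⁻¹ * (2⁻¹ ^ γ) ^ n) ^ p := by
        rw [ENNReal.mul_rpow_of_nonneg _ _ hX.p_pos.le, ENNReal.rpow_inv_rpow hX.p_pos.ne',
          ENNReal.rpow_mul]
        simp_rw [← ENNReal.rpow_natCast, ← ENNReal.rpow_mul, mul_right_comm]

end PseudoEMetricSpace

variable [EMetricSpace E] [CompleteSpace E]

theorem exists_modification_holderWith_unitInterval {X : I → Ω → E}
    (hX : IsAEKolmogorovProcess X P p q M) {γ : ℝ≥0} (hγ : 0 < γ) (hγq : γ * p + 1 < q) :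
    ∃ Y : I → Ω → E, (∀ t, Y t =ᵐ[P] X t) ∧ ∀ ω, ∃ C, HolderWith C γ (Y · ω) := by
  have hpath (ω : Ω) : ∃ g : I → E, (∃ C, HolderWith C γ g) ∧
      ((∃ K ≠ ∞, DyadicIncrementBound (X · ω) K (2⁻¹ ^ (γ : ℝ))) →
        ∀ t, Tendsto (fun n ↦ X (dyadicFloor n t) ω) atTop (𝓝 (g t))) := by
    by_cases hω : ∃ K ≠ ∞, DyadicIncrementBound (X · ω) K (2⁻¹ ^ (γ : ℝ))
    · obtain ⟨K, hK, hbound⟩ := hω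
      obtain ⟨g, hg, hlim⟩ := hbound.exists_holderWith_tendsto hγ hK
      exact ⟨g, hg, fun _ ↦ hlim⟩
    · exact ⟨fun _ ↦ X 0 ω, ⟨0, .const⟩, fun h ↦ absurd h hω⟩
  choose Y hholder hlim using hpath
  refine ⟨fun t ω ↦ Y ω t, fun t ↦ ?_, hholder⟩
  filter_upwards [ae_exists_dyadicIncrementBound hX hγq,
    ae_tendsto_of_edist_le_geometric hX (by simp) (edist_dyadicFloor_self_le · t)] with ω hω hX_t
  exact tendsto_nhds_unique (hlim ω hω t) hX_t

theorem exists_modification_holderWith {a b : ℝ} (hab : a < b) {X : Icc a b → Ω → E}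
    (hX : IsAEKolmogorovProcess X P p q M) {γ : ℝ≥0} (hγ : 0 < γ) (hγq : γ * p + 1 < q) :
    ∃ Y : Icc a b → Ω → E, (∀ t, Y t =ᵐ[P] X t) ∧ ∀ ω, ∃ C, HolderWith C γ (Y · ω) := by
  let e := iccHomeoI a b hab
  have hlen : 0 < b - a := sub_pos.2 hab
  have he : LipschitzWith (b - a)⁻¹.toNNReal e := .of_dist_le' fun s t ↦ by
    simp only [e, Subtype.dist_eq, Real.dist_eq, iccHomeoI_apply_coe]
    rw [← sub_div, sub_sub_sub_cancel_right, abs_div, abs_of_pos hlen, div_eq_inv_mul]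
  have he_symm : LipschitzWith (b - a).toNNReal e.symm := .of_dist_le' fun s t ↦ by
    simp only [e, Subtype.dist_eq, Real.dist_eq, iccHomeoI_symm_apply_coe]
    rw [add_sub_add_right_eq_sub, ← mul_sub, abs_mul, abs_of_pos hlen]
  obtain ⟨Y, hYX, hY⟩ := exists_modification_holderWith_unitInterval
    (isAEKolmogorovProcess_comp_lipschitzWith hX he_symm) hγ hγq
  refine ⟨fun t ↦ Y (e t), fun t ↦ by simpa using hYX (e t), fun ω ↦ ?_⟩
  obtain ⟨C, hC⟩ := hY ω
  exact ⟨_, mul_one γ ▸ hC.comp he.holderWith⟩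

end Kolmogorov

section Gaussian

lemma lintegral_enorm_rpow_gaussianReal_ne_top (m : ℝ) (v : ℝ≥0) {p : ℝ} (hp : 0 < p) :
    ∫⁻ x, ‖x‖ₑ ^ p ∂gaussianReal m v ≠ ∞ := by
  have hfin := lintegral_rpow_enorm_lt_top_of_eLpNorm_lt_top (by simpa using hp)
    ENNReal.coe_ne_top (memLp_id_gaussianReal (μ := m) (v := v) p.toNNReal).eLpNorm_lt_top
  simpa [hp.le] using hfin.ne

lemma lintegral_enorm_rpow_gaussianReal_zero (v : ℝ≥0) {p : ℝ} (hp : 0 ≤ p) :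
    ∫⁻ x, ‖x‖ₑ ^ p ∂gaussianReal 0 v = v ^ (p / 2) * ∫⁻ x, ‖x‖ₑ ^ p ∂gaussianReal 0 1 := by
  have hscale : gaussianReal 0 v = (gaussianReal 0 1).map (√v * ·) := by
    rw [gaussianReal_map_const_mul]
    congr 1
    · simp
    · ext
      simp
  have hsqrt : ‖√v‖ₑ ^ p = (v : ℝ≥0∞) ^ (p / 2) := by
    rw [Real.enorm_of_nonneg (Real.sqrt_nonneg _), Real.sqrt_eq_rpow,
      ← ENNReal.ofReal_rpow_of_nonneg v.coe_nonneg one_half_pos.le, ← ENNReal.rpow_mul,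
      ENNReal.ofReal_coe_nnreal, one_div_mul_eq_div]
  rw [hscale, lintegral_map (by fun_prop) (by fun_prop), ← hsqrt,
    ← lintegral_const_mul _ (by fun_prop)]
  simp_rw [enorm_mul, ENNReal.mul_rpow_of_nonneg _ _ hp]

variable {Ω S : Type*} [MeasurableSpace Ω] {P : Measure Ω}

lemma exists_isAEKolmogorovProcess_of_map_sub_eq_gaussianReal [PseudoMetricSpace S]
    [LinearOrder S] {X : S → Ω → ℝ} (hmeas : ∀ t, AEMeasurable (X t) P) {v : S → S → ℝ≥0}
    (hlaw : ∀ s t, s ≤ t → P.map (fun ω ↦ X t ω - X s ω) = gaussianReal 0 (v s t))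
    {C : ℝ≥0} {H p : ℝ} (hH : 0 < H) (hp : 0 < p)
    (hv : ∀ s t, s ≤ t → v s t ≤ C * nndist s t ^ (2 * H)) :
    ∃ M, IsAEKolmogorovProcess X P p (H * p) M := by
  set c := ∫⁻ x, ‖x‖ₑ ^ p ∂gaussianReal 0 1
  have hc : (C : ℝ≥0∞) ^ (p / 2) * c ≠ ∞ := ENNReal.mul_ne_top
    (ENNReal.rpow_ne_top_of_nonneg (by positivity) ENNReal.coe_ne_top)
    (lintegral_enorm_rpow_gaussianReal_ne_top 0 1 hp)
  refine ⟨((C : ℝ≥0∞) ^ (p / 2) * c).toNNReal,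
    isAEKolmogorovProcess_of_aemeasurable hmeas (fun s t ↦ ?_) hp (mul_pos hH hp)⟩
  wlog hst : s ≤ t generalizing s t
  · simpa only [edist_comm] using this t s (le_of_not_ge hst)
  rw [ENNReal.coe_toNNReal hc]
  calc ∫⁻ ω, edist (X s ω) (X t ω) ^ p ∂P = ∫⁻ x, ‖x‖ₑ ^ p ∂gaussianReal 0 (v s t) := by
        rw [← hlaw s t hst, lintegral_map' (by fun_prop) (by fun_prop)]
        simp_rw [edist_comm (X s _), edist_eq_enorm_sub]
    _ = v s t ^ (p / 2) * c := lintegral_enorm_rpow_gaussianReal_zero _ hp.le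
    _ ≤ (C * edist s t ^ (2 * H)) ^ (p / 2) * c := by
        gcongr
        rw [edist_nndist, ← ENNReal.coe_rpow_of_nonneg _ (by positivity)]
        exact mod_cast hv s t hst
    _ = C ^ (p / 2) * c * edist s t ^ (H * p) := by
        rw [ENNReal.mul_rpow_of_nonneg _ _ (by positivity), ← ENNReal.rpow_mul, mul_right_comm]
        ring_nf

theorem exists_modification_holderWith_of_map_sub_eq_gaussianReal {a b : ℝ} (hab : a < b)
    {X : Icc a b → Ω → ℝ} {v : Icc a b → Icc a b → ℝ≥0}
    (hlaw : ∀ s t, s ≤ t → P.map (fun ω ↦ X t ω - X s ω) = gaussianReal 0 (v s t))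
    {C : ℝ≥0} {H : ℝ} (hv : ∀ s t, s ≤ t → v s t ≤ C * nndist s t ^ (2 * H))
    {γ : ℝ≥0} (hγ : 0 < γ) (hγH : γ < H) :
    ∃ Y : Icc a b → Ω → ℝ, (∀ t, Y t =ᵐ[P] X t) ∧ ∀ ω, ∃ K, HolderWith K γ (Y · ω) := by
  -- Only the increments of `X` are known to be measurable, hence the passage to `X t - X a`.
  let origin : Icc a b := ⟨a, left_mem_Icc.2 hab.le⟩
  have hmeas (t : Icc a b) : AEMeasurable (fun ω ↦ X t ω - X origin ω) P :=
    .of_map_ne_zero <| hlaw origin t t.2.1 ▸ IsProbabilityMeasure.ne_zero _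
  have hgap : 0 < H - γ := sub_pos.2 hγH
  obtain ⟨M, hM⟩ := exists_isAEKolmogorovProcess_of_map_sub_eq_gaussianReal hmeas
    (by simpa using hlaw) (γ.coe_nonneg.trans_lt hγH) (div_pos two_pos hgap) hv
  have hexponent : γ * (2 / (H - γ)) + 1 < H * (2 / (H - γ)) := by
    have hdiff : (H - γ) * (2 / (H - γ)) = 2 := mul_div_cancel₀ _ hgap.ne'
    linarith
  obtain ⟨Y, hYX, hY⟩ := exists_modification_holderWith hab hM hγ hexponent
  refine ⟨fun t ω ↦ X origin ω + Y t ω, fun t ↦ ?_, fun ω ↦ ?_⟩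
  · filter_upwards [hYX t] with ω hω
    rw [hω, add_sub_cancel]
  · obtain ⟨K, hK⟩ := hY ω
    exact ⟨K, fun s t ↦ by simpa only [edist_add_left] using hK s t⟩

theorem stmt_2_general {H T : ℝ} (hT : 0 < T) {B : ℝ → Ω → ℝ} {v : ℝ → ℝ → ℝ≥0}
    (hB : ∀ s t : ℝ, 0 ≤ s → s ≤ t → t ≤ T →
      P.map (fun ω ↦ B t ω - B s ω) = gaussianReal 0 (v s t))
    {C : ℝ≥0} (hv : ∀ s t : ℝ, 0 ≤ s → s ≤ t → t ≤ T → v s t ≤ C * (t - s) ^ (2 * H)) :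
    ∀ γ : ℝ, 0 < γ → γ < H →
      ∃ B' : ℝ → Ω → ℝ,
        (∀ t ∈ Icc (0 : ℝ) T, ∀ᵐ ω ∂P, B' t ω = B t ω) ∧
        (∀ ω, ∃ K : ℝ, ∀ s ∈ Icc (0 : ℝ) T, ∀ t ∈ Icc (0 : ℝ) T,
          |B' t ω - B' s ω| ≤ K * |t - s| ^ γ) := by
  intro γ hγ hγH
  lift γ to ℝ≥0 using hγ.le
  have hvar (s t : Icc 0 T) (hst : s ≤ t) : v s t ≤ C * nndist s t ^ (2 * H) := by
    have hdist : dist s t = t - s := by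
      rw [dist_comm, Subtype.dist_eq, Real.dist_eq, abs_of_nonneg (sub_nonneg.2 (mod_cast hst))]
    simpa [← NNReal.coe_le_coe, hdist] using hv s t s.2.1 hst t.2.2
  obtain ⟨Y, hYB, hY⟩ := exists_modification_holderWith_of_map_sub_eq_gaussianReal hT
    (X := fun t ↦ B t) (fun s t hst ↦ hB s t s.2.1 hst t.2.2) hvar (mod_cast hγ) hγH
  refine ⟨fun t ω ↦ Y (projIcc 0 T hT.le t) ω, fun t ht ↦ ?_, fun ω ↦ ?_⟩
  · simpa only [projIcc_of_mem _ ht] using! hYB ⟨t, ht⟩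
  · obtain ⟨K, hK⟩ := hY ω
    refine ⟨K, fun s hs t ht ↦ ?_⟩
    simpa only [projIcc_of_mem _ hs, projIcc_of_mem _ ht] using! hK.dist_le ⟨t, ht⟩ ⟨s, hs⟩

end Gaussian

/-- A process on `[0,T]` whose increments `B_t - B_s` are centered Gaussian with
variance `(t-s)^{2H}` (e.g. a coordinate of fractional Brownian motion with Hurst
parameter `H`) admits, for every `γ ∈ (0,H)`, a modification all of whose sample
paths are `γ`-Hölder continuous on `[0,T]`. -/
theorem stmt_2
    {Ω : Type*} [MeasurableSpace Ω] (P : Measure Ω) [IsProbabilityMeasure P]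
    (H T : ℝ) (hH0 : 0 < H) (hH1 : H < 1) (hT : 0 < T)
    (B : ℝ → Ω → ℝ)
    (hB : ∀ s t : ℝ, 0 ≤ s → s ≤ t → t ≤ T →
      Measure.map (fun ω => B t ω - B s ω) P =
        gaussianReal 0 (Real.toNNReal ((t - s) ^ (2 * H)))) :
    ∀ γ : ℝ, 0 < γ → γ < H →
      ∃ B' : ℝ → Ω → ℝ,
        (∀ t ∈ Icc (0 : ℝ) T, ∀ᵐ ω ∂P, B' t ω = B t ω) ∧
        (∀ ω, ∃ K : ℝ, ∀ s ∈ Icc (0 : ℝ) T, ∀ t ∈ Icc (0 : ℝ) T,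
          |B' t ω - B' s ω| ≤ K * |t - s| ^ γ) := by
  refine stmt_2_general hT hB (C := 1) fun s t _ hst _ ↦ ?_
  rw [Real.coe_toNNReal _ (Real.rpow_nonneg (sub_nonneg.2 hst) _), NNReal.coe_one, one_mul]
end

section
/- Let α ∈ [0,1) and let n ≥ 2 be an integer. There exists a constant C > 0, depending only on α and n, such that for all real numbers 0 ≤ s ≤ t, the iterated integral over the ordered simplex satisfies ∫_{s ≤ u₁ ≤ u₂ ≤ ⋯ ≤ u_n ≤ t} ∏_{i=2}^{n} (u_i − u_{i−1})^{−α} du₁ ⋯ du_n ≤ C (t − s)^{(1−α)(n−1)+1}. -/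
open MeasureTheory

open Set
open scoped ENNReal

/-!
Integrating the gaps `u (i + 1) - u i` one at a time, with `u 0` last, turns a translation-invariant
integral of a function of `u 0` and the gaps into a product of one-dimensional integrals. On the
simplex `u 0` ranges over `[s, t]` and every gap lies in `[0, t - s]`. Relaxing the simplex to these
constraints bounds the integral by `(t - s) * ∏ i, ∫ x in 0..(t - s), x ^ (-α i)`.
-/

lemma lintegral_pi_fin_succ {n : ℕ} {X : Fin (n + 1) → Type*} [∀ i, MeasurableSpace (X i)]
    (μ : ∀ i, Measure (X i)) [∀ i, SigmaFinite (μ i)] {F : (∀ i, X i) → ℝ≥0∞} (hF : Measurable F) :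
    ∫⁻ u, F u ∂Measure.pi μ =
      ∫⁻ x, ∫⁻ y, F (Fin.cons x y) ∂Measure.pi (fun i => μ (Fin.succ i)) ∂μ 0 := by
  rw [← (measurePreserving_piFinSuccAbove μ 0).symm.lintegral_comp hF,
    lintegral_prod _ (by fun_prop)]
  simp_rw [MeasurableEquiv.piFinSuccAbove_symm_apply, Fin.insertNthEquiv_zero]
  rfl

lemma lintegral_mul_prod_sub_eq {G : Type*} [AddGroup G] [MeasurableSpace G] [MeasurableAdd G]
    [MeasurableSub₂ G] (μ : Measure G) [SigmaFinite μ] [μ.IsAddRightInvariant] {n : ℕ}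
    {f : G → ℝ≥0∞} {g : Fin n → G → ℝ≥0∞} (hf : Measurable f) (hg : ∀ i, Measurable (g i)) :
    ∫⁻ u : Fin (n + 1) → G, f (u 0) * ∏ i, g i (u i.succ - u i.castSucc) ∂Measure.pi (fun _ => μ) =
      (∫⁻ x, f x ∂μ) * ∏ i, ∫⁻ x, g i x ∂μ := by
  induction n generalizing f with
  | zero => simpa using! (measurePreserving_funUnique μ (Fin 1)).lintegral_comp hf
  | succ n ih =>
    have inner (x : G) : ∫⁻ y : Fin (n + 1) → G,
        f x * (g 0 (y 0 - x) * ∏ i : Fin n, g i.succ (y i.succ - y i.castSucc))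
          ∂Measure.pi (fun _ => μ) = f x * ∏ i, ∫⁻ z, g i z ∂μ := by
      have hg₀ : Measurable fun z => g 0 (z - x) := by fun_prop
      rw [lintegral_const_mul _ (by fun_prop), ih hg₀ fun i => hg i.succ,
        lintegral_sub_right_eq_self (g 0) x, Fin.prod_univ_succ]
    rw [lintegral_pi_fin_succ _ (by fun_prop)]
    simp only [Fin.prod_univ_succ, Fin.cons_zero, Fin.cons_succ, Fin.castSucc_zero,
      ← Fin.succ_castSucc, inner]
    rw [lintegral_mul_const _ hf]

lemma setLIntegral_Icc_zero_rpow {p r : ℝ} (hp : -1 < p) (hr : 0 ≤ r) :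
    ∫⁻ x in Icc 0 r, ENNReal.ofReal (x ^ p) = ENNReal.ofReal (r ^ (p + 1) / (p + 1)) := by
  have integrable : IntegrableOn (fun x : ℝ => x ^ p) (Icc 0 r) :=
    (intervalIntegrable_iff_integrableOn_Icc_of_le hr).1
      (intervalIntegral.intervalIntegrable_rpow' hp)
  have nonneg : ∀ᵐ x ∂volume.restrict (Icc 0 r), 0 ≤ x ^ p :=
    ae_restrict_of_forall_mem measurableSet_Icc fun x hx => Real.rpow_nonneg hx.1 p
  rw [← ofReal_integral_eq_lintegral_ofReal integrable nonneg, integral_Icc_eq_integral_Ioc,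
    ← intervalIntegral.integral_of_le hr, integral_rpow (Or.inl hp),
    Real.zero_rpow (by linarith), sub_zero]

/-- The simplex `s ≤ u₀ ≤ u₁ ≤ ⋯ ≤ uₙ ≤ t`, the domain of integration of the theorem. It has
`n + 1` coordinates and hence `n` gaps; the order is imposed on consecutive coordinates only. -/
def orderedSimplex {X : Type*} [LE X] (n : ℕ) (s t : X) : Set (Fin (n + 1) → X) :=
  {u | s ≤ u 0 ∧ (∀ i : Fin n, u i.castSucc ≤ u i.succ) ∧ u (Fin.last n) ≤ t}

namespace orderedSimplex

lemma mem_Icc {X : Type*} [Preorder X] {n : ℕ} {s t : X} {u : Fin (n + 1) → X}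
    (hu : u ∈ orderedSimplex n s t) (j : Fin (n + 1)) : u j ∈ Icc s t :=
  have mono : Monotone u := Fin.monotone_iff_le_succ.2 hu.2.1
  ⟨hu.1.trans (mono (Fin.zero_le j)), (mono (Fin.le_last j)).trans hu.2.2⟩

lemma sub_mem_Icc {X : Type*} [AddCommGroup X] [PartialOrder X] [IsOrderedAddMonoid X] {n : ℕ}
    {s t : X} {u : Fin (n + 1) → X} (hu : u ∈ orderedSimplex n s t) (i : Fin n) :
    u i.succ - u i.castSucc ∈ Icc 0 (t - s) :=
  ⟨sub_nonneg.2 (hu.2.1 i), sub_le_sub (mem_Icc hu i.succ).2 (mem_Icc hu i.castSucc).1⟩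

lemma setLIntegral_prod_le {n : ℕ} {g : Fin n → ℝ → ℝ≥0∞} (hg : ∀ i, Measurable (g i)) (s t : ℝ) :
    ∫⁻ u in orderedSimplex n s t, ∏ i, g i (u i.succ - u i.castSucc) ≤
      ENNReal.ofReal (t - s) * ∏ i, ∫⁻ x in Icc 0 (t - s), g i x := by
  let f : ℝ → ℝ≥0∞ := (Icc s t).indicator 1
  let h (i : Fin n) : ℝ → ℝ≥0∞ := (Icc 0 (t - s)).indicator (g i)
  have hf : Measurable f := measurable_one.indicator measurableSet_Icc
  have hh (i : Fin n) : Measurable (h i) := (hg i).indicator measurableSet_Icc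
  calc
    _ ≤ ∫⁻ u in orderedSimplex n s t, f (u 0) * ∏ i, h i (u i.succ - u i.castSucc) := by
      refine setLIntegral_mono (by fun_prop) fun u hu => ?_
      simp [f, h, indicator_of_mem (mem_Icc hu 0), indicator_of_mem (sub_mem_Icc hu _)]
    _ ≤ ∫⁻ u : Fin (n + 1) → ℝ, f (u 0) * ∏ i, h i (u i.succ - u i.castSucc) :=
      setLIntegral_le_lintegral _ _
    _ = (∫⁻ x, f x) * ∏ i, ∫⁻ x, h i x := lintegral_mul_prod_sub_eq volume hf hh
    _ = _ := by simp [f, h, lintegral_indicator]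

end orderedSimplex

theorem stmt_3_general {n : ℕ} {α : Fin n → ℝ} (hα : ∀ i, α i < 1) {s t : ℝ} (hst : s ≤ t) :
    ∫⁻ u in orderedSimplex n s t, ENNReal.ofReal (∏ i, (u i.succ - u i.castSucc) ^ (-α i)) ≤
      ENNReal.ofReal ((∏ i, (1 - α i)⁻¹) * (t - s) ^ (∑ i, (1 - α i) + 1)) := by
  have hts : 0 ≤ t - s := sub_nonneg.2 hst
  have hα' (i : Fin n) : 0 < 1 - α i := sub_pos.2 (hα i)
  calc
    _ ≤ ∫⁻ u in orderedSimplex n s t,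
          ∏ i, ENNReal.ofReal ((u i.succ - u i.castSucc) ^ (-α i)) := by
      refine setLIntegral_mono (by fun_prop) fun u hu => (ENNReal.ofReal_prod_of_nonneg ?_).le
      exact fun i _ => Real.rpow_nonneg (orderedSimplex.sub_mem_Icc hu i).1 _
    _ ≤ ENNReal.ofReal (t - s) *
          ∏ i, ∫⁻ x in Icc 0 (t - s), ENNReal.ofReal (x ^ (-α i)) :=
      orderedSimplex.setLIntegral_prod_le (g := fun i x => ENNReal.ofReal (x ^ (-α i)))
        (fun i => by fun_prop) s t
    _ = ENNReal.ofReal ((t - s) * ∏ i, (t - s) ^ (1 - α i) / (1 - α i)) := by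
      have gap (i : Fin n) := setLIntegral_Icc_zero_rpow (neg_lt_neg (hα i)) hts
      have nonneg (i : Fin n) : 0 ≤ (t - s) ^ (1 - α i) / (1 - α i) :=
        div_nonneg (Real.rpow_nonneg hts _) (hα' i).le
      simp only [gap, neg_add_eq_sub]
      rw [ENNReal.ofReal_mul hts, ENNReal.ofReal_prod_of_nonneg fun i _ => nonneg i]
    _ = _ := by
      have sum_nonneg : 0 ≤ ∑ i, (1 - α i) := Finset.sum_nonneg fun i _ => (hα' i).le
      rw [Real.rpow_add_of_nonneg hts sum_nonneg zero_le_one, Real.rpow_one,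
        Real.rpow_sum_of_nonneg hts fun i _ => (hα' i).le, Finset.prod_div_distrib,
        Finset.prod_inv_distrib]
      ring_nf

/-- Iterated integral estimate over the ordered simplex: for `α ∈ [0,1)` and an
integer `n = m + 2 ≥ 2`, there is `C > 0` (depending only on `α` and `n`) such that
for all `0 ≤ s ≤ t`,
`∫_{s ≤ u₁ ≤ ⋯ ≤ u_n ≤ t} ∏_{i=2}^n (u_i - u_{i-1})^{-α} du ≤ C (t-s)^{(1-α)(n-1)+1}`. -/
theorem stmt_3 (α : ℝ) (hα0 : 0 ≤ α) (hα1 : α < 1) (m : ℕ) :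
    ∃ C : ℝ, 0 < C ∧ ∀ s t : ℝ, 0 ≤ s → s ≤ t →
      ∫⁻ u in {u : Fin (m + 2) → ℝ |
          s ≤ u 0 ∧ (∀ i : Fin (m + 1), u i.castSucc ≤ u i.succ) ∧ u (Fin.last (m + 1)) ≤ t},
        ENNReal.ofReal (∏ i : Fin (m + 1), (u i.succ - u i.castSucc) ^ (-α)) ≤
      ENNReal.ofReal (C * (t - s) ^ ((1 - α) * (m + 1) + 1)) :=
  ⟨∏ _ : Fin (m + 1), (1 - α)⁻¹, Finset.prod_pos fun _ _ => inv_pos.2 (sub_pos.2 hα1),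
    fun s t _ hst => by
      simpa [orderedSimplex, -Finset.sum_sub_distrib, mul_comm] using
        stmt_3_general (fun _ : Fin (m + 1) => hα1) hst⟩
end

section
/- Let H ∈ (0, 1/2), let δ ∈ (0, min(1, 1/H − 2)), let T > 0 and R > 0. There exists a constant C > 0, depending only on H, δ, T, R, such that for all real numbers s < u with u − s ≤ T and all r ∈ (0, R], one has ∫_s^u min( r (u − v)^{−2H}, r² (u − v)^{−3H} ) dv ≤ C r^{1+δ}. -/
open MeasureTheory

/-!
The minimum of two nonnegative numbers is at most any weighted geometric mean of them. With weights
`1 - δ` and `δ`, the integrand is therefore at most `r ^ (1 + δ) * (u - v) ^ (-((2 + δ) * H))`, and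
this power of `u - v` is integrable up to `v = u` precisely because `δ < 1 / H - 2`.
-/

theorem min_le_rpow_mul_rpow {a b θ : ℝ} (ha : 0 ≤ a) (hb : 0 ≤ b) (hθ0 : 0 ≤ θ) (hθ1 : θ ≤ 1) :
    min a b ≤ a ^ (1 - θ) * b ^ θ := by
  have hmin : 0 ≤ min a b := le_min ha hb
  have hθ : 0 ≤ 1 - θ := sub_nonneg.mpr hθ1
  calc min a b = min a b ^ (1 - θ) * min a b ^ θ := by
        rw [← Real.rpow_add_of_nonneg hmin hθ hθ0, sub_add_cancel, Real.rpow_one]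
    _ ≤ a ^ (1 - θ) * b ^ θ := by
        gcongr
        exacts [min_le_left a b, min_le_right a b]

theorem min_mul_rpow_le {r x a b c d θ : ℝ} (hr : 0 < r) (hx : 0 < x) (hθ0 : 0 ≤ θ) (hθ1 : θ ≤ 1) :
    min (r ^ a * x ^ c) (r ^ b * x ^ d) ≤
      r ^ (a * (1 - θ) + b * θ) * x ^ (c * (1 - θ) + d * θ) := by
  calc min (r ^ a * x ^ c) (r ^ b * x ^ d)
      ≤ (r ^ a * x ^ c) ^ (1 - θ) * (r ^ b * x ^ d) ^ θ :=
        min_le_rpow_mul_rpow (by positivity) (by positivity) hθ0 hθ1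
    _ = r ^ (a * (1 - θ) + b * θ) * x ^ (c * (1 - θ) + d * θ) := by
        rw [Real.mul_rpow (by positivity) (by positivity),
          Real.mul_rpow (by positivity) (by positivity), Real.rpow_add hr, Real.rpow_add hx]
        simp only [← Real.rpow_mul hr.le, ← Real.rpow_mul hx.le]
        ring

theorem intervalIntegrable_sub_left_rpow {s u p : ℝ} (hp : -1 < p) :
    IntervalIntegrable (fun v ↦ (u - v) ^ p) volume s u := by
  simpa using (intervalIntegral.intervalIntegrable_rpow' (a := u - s) (b := 0) hp).comp_sub_left u

theorem integral_sub_left_rpow {s u p : ℝ} (hp : -1 < p) :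
    ∫ v in s..u, (u - v) ^ p = (u - s) ^ (p + 1) / (p + 1) := by
  rw [intervalIntegral.integral_comp_sub_left (fun x ↦ x ^ p), integral_rpow (Or.inl hp), sub_self,
    Real.zero_rpow (by linarith), sub_zero]

theorem setLIntegral_Ioo_sub_left_rpow {s u p : ℝ} (hsu : s ≤ u) (hp : -1 < p) :
    ∫⁻ v in Set.Ioo s u, ENNReal.ofReal ((u - v) ^ p) =
      ENNReal.ofReal ((u - s) ^ (p + 1) / (p + 1)) := by
  have hint : IntegrableOn (fun v ↦ (u - v) ^ p) (Set.Ioo s u) :=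
    (intervalIntegrable_iff_integrableOn_Ioo_of_le hsu).mp (intervalIntegrable_sub_left_rpow hp)
  have hnonneg : 0 ≤ᵐ[volume.restrict (Set.Ioo s u)] fun v ↦ (u - v) ^ p :=
    ae_restrict_of_forall_mem measurableSet_Ioo fun v hv ↦
      Real.rpow_nonneg (sub_nonneg.mpr hv.2.le) p
  rw [← ofReal_integral_eq_lintegral_ofReal hint hnonneg, ← integral_Ioc_eq_integral_Ioo,
    ← intervalIntegral.integral_of_le hsu, integral_sub_left_rpow hp]

theorem setLIntegral_Ioo_min_mul_rpow_le {s u r a b c d θ : ℝ} (hsu : s ≤ u) (hr : 0 < r)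
    (hθ0 : 0 ≤ θ) (hθ1 : θ ≤ 1) (hp : -1 < c * (1 - θ) + d * θ) :
    ∫⁻ v in Set.Ioo s u,
        ENNReal.ofReal (min (r ^ a * (u - v) ^ c) (r ^ b * (u - v) ^ d)) ≤
      ENNReal.ofReal (r ^ (a * (1 - θ) + b * θ) *
        ((u - s) ^ (c * (1 - θ) + d * θ + 1) / (c * (1 - θ) + d * θ + 1))) := by
  set q := a * (1 - θ) + b * θ
  set p := c * (1 - θ) + d * θ
  have hq : 0 ≤ r ^ q := Real.rpow_nonneg hr.le q
  calc ∫⁻ v in Set.Ioo s u, ENNReal.ofReal (min (r ^ a * (u - v) ^ c) (r ^ b * (u - v) ^ d))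
      ≤ ∫⁻ v in Set.Ioo s u, ENNReal.ofReal (r ^ q * (u - v) ^ p) :=
        setLIntegral_mono' measurableSet_Ioo fun v hv ↦
          ENNReal.ofReal_le_ofReal (min_mul_rpow_le hr (sub_pos.mpr hv.2) hθ0 hθ1)
    _ = ENNReal.ofReal (r ^ q) * ∫⁻ v in Set.Ioo s u, ENNReal.ofReal ((u - v) ^ p) := by
        simp only [ENNReal.ofReal_mul hq]
        exact lintegral_const_mul' _ _ ENNReal.ofReal_ne_top
    _ = ENNReal.ofReal (r ^ q * ((u - s) ^ (p + 1) / (p + 1))) := by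
        rw [setLIntegral_Ioo_sub_left_rpow hsu hp, ENNReal.ofReal_mul hq]

theorem stmt_4_general {H δ T : ℝ} (hδ0 : 0 ≤ δ) (hδ1 : δ ≤ 1) (hδH : (2 + δ) * H < 1)
    (hT : 0 < T) :
    ∃ C : ℝ, 0 < C ∧ ∀ s u r : ℝ, s < u → u - s ≤ T → 0 < r →
      ∫⁻ v in Set.Ioo s u,
        ENNReal.ofReal (min (r * (u - v) ^ (-(2 * H))) (r ^ 2 * (u - v) ^ (-(3 * H)))) ≤
      ENNReal.ofReal (C * r ^ (1 + δ)) := by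
  have hq : 0 < 1 - (2 + δ) * H := sub_pos.mpr hδH
  refine ⟨T ^ (1 - (2 + δ) * H) / (1 - (2 + δ) * H), div_pos (Real.rpow_pos_of_pos hT _) hq,
    fun s u r hsu huT hr ↦ ?_⟩
  have hpow : (u - s) ^ (1 - (2 + δ) * H) ≤ T ^ (1 - (2 + δ) * H) :=
    Real.rpow_le_rpow (sub_nonneg.mpr hsu.le) huT hq.le
  have hbound := setLIntegral_Ioo_min_mul_rpow_le (a := 1) (b := 2) (c := -(2 * H))
    (d := -(3 * H)) hsu.le hr hδ0 hδ1 (by linarith)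
  have hexp_r : 1 * (1 - δ) + 2 * δ = 1 + δ := by ring
  have hexp_sub : -(2 * H) * (1 - δ) + -(3 * H) * δ + 1 = 1 - (2 + δ) * H := by ring
  simp only [hexp_r, hexp_sub, Real.rpow_one, Real.rpow_two] at hbound
  refine hbound.trans (ENNReal.ofReal_le_ofReal ?_)
  rw [mul_comm]
  gcongr

/-- For `H ∈ (0,1/2)` and `δ ∈ (0, min(1, 1/H - 2))`, there is `C > 0` depending only on
`H, δ, T, R`, such that for all `s < u` with `u - s ≤ T` and all `r ∈ (0, R]`,
`∫_s^u min(r (u-v)^{-2H}, r² (u-v)^{-3H}) dv ≤ C r^{1+δ}`. -/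
theorem stmt_4 (H δ T R : ℝ) (hH0 : 0 < H) (hH : H < 1 / 2)
    (hδ0 : 0 < δ) (hδ : δ < min 1 (1 / H - 2)) (hT : 0 < T) (hR : 0 < R) :
    ∃ C : ℝ, 0 < C ∧ ∀ s u r : ℝ, s < u → u - s ≤ T → 0 < r → r ≤ R →
      ∫⁻ v in Set.Ioo s u,
        ENNReal.ofReal (min (r * (u - v) ^ (-(2 * H))) (r ^ 2 * (u - v) ^ (-(3 * H)))) ≤
      ENNReal.ofReal (C * r ^ (1 + δ)) := by
  obtain ⟨hδ1, hδ2⟩ := lt_min_iff.mp hδ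
  have hδH : (2 + δ) * H < 1 := (lt_div_iff₀ hH0).mp (by linarith)
  obtain ⟨C, hC, hbound⟩ := stmt_4_general hδ0.le hδ1.le hδH hT
  exact ⟨C, hC, fun s u r hsu huT hr _ ↦ hbound s u r hsu huT hr⟩
end

section
/- Let T > 0, γ ∈ (0, 1), G > 0, and let X : [0, T] → ℝ be a function satisfying |X_u − X_s| ≤ G|u − s|^γ for all s, u ∈ [0, T]. Fix t ∈ [0, T) and suppose L : [0, T] × ℝ → [0, ∞) is a function such that for every δ ∈ (0, T − t] and every Borel set A ⊆ ℝ, ∫_A (L(t+δ, x) − L(t, x)) dx = λ({s ∈ [t, t+δ] : X_s ∈ A}), where λ is Lebesgue measure on ℝ (i.e., x ↦ L(t+δ, x) − L(t, x) is an occupation density for X on [t, t+δ]). Then for every α > 1 − γ, one has limsup_{δ ↓ 0} sup_{x ∈ ℝ} (L(t+δ, x) − L(t, x)) / δ^α = ∞. -/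
open MeasureTheory Set Filter Topology
open scoped ENNReal

/-!
On `[t, t + δ]` a path that is `γ`-Hölder at `t` stays in a ball of radius of order `δ ^ γ`, whose
measure in a `d`-dimensional space is of order `δ ^ (d * γ)`. An occupation density spreads the
total mass `δ` over this ball, so its supremum is at least of order `δ ^ (1 - d * γ)`, which beats
`δ ^ α` as soon as `α > 1 - d * γ`.
-/

section OccupationDensity

variable {S E : Type*} [MeasurableSpace S] [MeasurableSpace E]

/-- `f` is a density with respect to `μ` of the occupation measure `A ↦ ν {s ∈ I | X s ∈ A}` of the
path `X` on the time set `I`. The density is real-valued and may take negative values; as the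
Bochner integral of a non-integrable function is `0`, integrability of `f` is only forced on sets
of positive finite occupation measure. -/
def IsOccupationDensity (ν : Measure S) (I : Set S) (X : S → E) (μ : Measure E) (f : E → ℝ) :
    Prop :=
  ∀ A, MeasurableSet A → ∫ x in A, f x ∂μ = ν.real {s ∈ I | X s ∈ A}

theorem ofReal_integral_le_lintegral_ofReal (μ : Measure E) (f : E → ℝ) :
    ENNReal.ofReal (∫ x, f x ∂μ) ≤ ∫⁻ x, ENNReal.ofReal (f x) ∂μ := by
  by_cases hf : Integrable f μ
  · rw [integral_eq_lintegral_pos_part_sub_lintegral_neg_part hf]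
    exact (ENNReal.ofReal_le_ofReal (sub_le_self _ ENNReal.toReal_nonneg)).trans
      ENNReal.ofReal_toReal_le
  · simp [integral_undef hf]

theorem ofReal_setIntegral_le_iSup_mul (μ : Measure E) (f : E → ℝ) (A : Set E) :
    ENNReal.ofReal (∫ x in A, f x ∂μ) ≤ (⨆ x, ENNReal.ofReal (f x)) * μ A :=
  calc ENNReal.ofReal (∫ x in A, f x ∂μ)
      ≤ ∫⁻ x in A, ENNReal.ofReal (f x) ∂μ := ofReal_integral_le_lintegral_ofReal _ f
    _ ≤ (⨆ x, ENNReal.ofReal (f x)) * μ.restrict A univ := lintegral_le_iSup_mul _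
    _ = (⨆ x, ENNReal.ofReal (f x)) * μ A := by rw [Measure.restrict_apply_univ]

theorem IsOccupationDensity.measure_le_iSup_mul {ν : Measure S} {I : Set S} {X : S → E}
    {μ : Measure E} {f : E → ℝ} (hf : IsOccupationDensity ν I X μ f) (hI : ν I ≠ ∞)
    {A : Set E} (hA : MeasurableSet A) (hXA : MapsTo X I A) :
    ν I ≤ (⨆ x, ENNReal.ofReal (f x)) * μ A := by
  have integral_eq : ∫ x in A, f x ∂μ = ν.real I := by
    rw [hf A hA, sep_eq_self_iff_mem_true.2 hXA]
  calc ν I = ENNReal.ofReal (∫ x in A, f x ∂μ) := by rw [integral_eq, ofReal_measureReal hI]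
    _ ≤ (⨆ x, ENNReal.ofReal (f x)) * μ A := ofReal_setIntegral_le_iSup_mul μ f A

end OccupationDensity

section Asymptotics

theorem ofReal_rpow_le_div_of_ofReal_le_mul {a : ℝ≥0∞} {K α β δ : ℝ} (hK : 0 < K) (hδ : 0 < δ)
    (h : ENNReal.ofReal δ ≤ a * ENNReal.ofReal (K * δ ^ β)) :
    ENNReal.ofReal (K⁻¹ * δ ^ (1 - β - α)) ≤ a / ENNReal.ofReal (δ ^ α) := by
  have rpow_eq : K⁻¹ * δ ^ (1 - β - α) = δ / (K * δ ^ β) / δ ^ α := by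
    rw [Real.rpow_sub hδ, Real.rpow_sub hδ, Real.rpow_one]
    field_simp
  rw [rpow_eq, ENNReal.ofReal_div_of_pos (by positivity), ENNReal.ofReal_div_of_pos (by positivity)]
  gcongr
  exact ENNReal.div_le_of_le_mul h

theorem tendsto_div_ofReal_rpow_nhds_top {a : ℝ → ℝ≥0∞} {K α β : ℝ} (hK : 0 < K)
    (ha : ∀ᶠ δ in 𝓝[>] (0 : ℝ), ENNReal.ofReal δ ≤ a δ * ENNReal.ofReal (K * δ ^ β))
    (hα : 1 - β < α) :
    Tendsto (fun δ => a δ / ENNReal.ofReal (δ ^ α)) (𝓝[>] 0) (𝓝 ⊤) := by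
  have rpow_tendsto : Tendsto (fun δ : ℝ => K⁻¹ * δ ^ (1 - β - α)) (𝓝[>] 0) atTop :=
    (tendsto_rpow_neg_nhdsGT_zero (sub_neg.2 hα)).const_mul_atTop (inv_pos.2 hK)
  refine tendsto_nhds_top_mono (ENNReal.tendsto_ofReal_atTop.comp rpow_tendsto) ?_
  filter_upwards [ha, self_mem_nhdsWithin] with δ hδ hδ_pos
  exact ofReal_rpow_le_div_of_ofReal_le_mul hK hδ_pos hδ

theorem tendsto_const_mul_rpow_nhdsGT_zero {G γ : ℝ} (hG : 0 < G) (hγ : 0 < γ) :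
    Tendsto (fun δ : ℝ => G * δ ^ γ) (𝓝[>] 0) (𝓝[>] 0) := by
  refine tendsto_nhdsWithin_iff.2 ⟨?_, ?_⟩
  · have continuous_rpow : Continuous fun δ : ℝ => G * δ ^ γ :=
      (Real.continuous_rpow_const hγ.le).const_mul G
    simpa [Real.zero_rpow hγ.ne'] using (continuous_rpow.tendsto 0).mono_left nhdsWithin_le_nhds
  · filter_upwards [self_mem_nhdsWithin] with δ hδ
    exact mul_pos hG (Real.rpow_pos_of_pos hδ γ)

end Asymptotics

section HolderAtPoint

variable {E : Type*} [PseudoMetricSpace E] {X : ℝ → E} {t γ G : ℝ}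

theorem eventually_mapsTo_closedBall_of_holderAt (hγ : 0 < γ) (hG : 0 < G)
    (hX : ∀ᶠ s in 𝓝[>] t, dist (X s) (X t) ≤ G * (s - t) ^ γ) :
    ∀ᶠ δ in 𝓝[>] (0 : ℝ), MapsTo X (Icc t (t + δ)) (Metric.closedBall (X t) (G * δ ^ γ)) := by
  obtain ⟨u, htu, hu⟩ := mem_nhdsGT_iff_exists_Ioc_subset.1 hX
  filter_upwards [Ioc_mem_nhdsGT (sub_pos.2 htu)] with δ hδ s hs
  have hδ_pos : 0 < δ := hδ.1
  rw [Metric.mem_closedBall]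
  rcases hs.1.eq_or_lt with rfl | hts
  · rw [dist_self]
    positivity
  · calc dist (X s) (X t) ≤ G * (s - t) ^ γ := hu ⟨hts, by linarith [hs.2, hδ.2]⟩
      _ ≤ G * δ ^ γ := by
        gcongr
        exact sub_le_iff_le_add'.2 hs.2

variable [MeasurableSpace E] [OpensMeasurableSpace E] {μ : Measure E} {C d : ℝ} {f : ℝ → E → ℝ}

theorem eventually_ofReal_le_iSup_occupationDensity_mul (hγ : 0 < γ) (hG : 0 < G)
    (hX : ∀ᶠ s in 𝓝[>] t, dist (X s) (X t) ≤ G * (s - t) ^ γ)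
    (hμ : ∀ᶠ r in 𝓝[>] (0 : ℝ), μ (Metric.closedBall (X t) r) ≤ ENNReal.ofReal (C * r ^ d))
    (hf : ∀ᶠ δ in 𝓝[>] (0 : ℝ), IsOccupationDensity volume (Icc t (t + δ)) X μ (f δ)) :
    ∀ᶠ δ in 𝓝[>] (0 : ℝ), ENNReal.ofReal δ ≤
      (⨆ x, ENNReal.ofReal (f δ x)) * ENNReal.ofReal (C * G ^ d * δ ^ (d * γ)) := by
  filter_upwards [eventually_mapsTo_closedBall_of_holderAt hγ hG hX, hf, self_mem_nhdsWithin,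
    (tendsto_const_mul_rpow_nhdsGT_zero hG hγ).eventually hμ] with δ hXδ hfδ hδ hμδ
  have hδ_nonneg : 0 ≤ δ := (mem_Ioi.1 hδ).le
  have radius_rpow : (G * δ ^ γ) ^ d = G ^ d * δ ^ (d * γ) := by
    rw [Real.mul_rpow hG.le (by positivity), ← Real.rpow_mul hδ_nonneg, mul_comm γ d]
  calc ENNReal.ofReal δ = volume (Icc t (t + δ)) := by rw [Real.volume_Icc, add_sub_cancel_left]
    _ ≤ (⨆ x, ENNReal.ofReal (f δ x)) * μ (Metric.closedBall (X t) (G * δ ^ γ)) :=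
      hfδ.measure_le_iSup_mul measure_Icc_lt_top.ne Metric.isClosed_closedBall.measurableSet hXδ
    _ ≤ (⨆ x, ENNReal.ofReal (f δ x)) * ENNReal.ofReal (C * (G * δ ^ γ) ^ d) := by gcongr
    _ = (⨆ x, ENNReal.ofReal (f δ x)) * ENNReal.ofReal (C * G ^ d * δ ^ (d * γ)) := by
      rw [radius_rpow, mul_assoc]

theorem stmt_8_general (hγ : 0 < γ) (hG : 0 < G) (hC : 0 < C)
    (hX : ∀ᶠ s in 𝓝[>] t, dist (X s) (X t) ≤ G * (s - t) ^ γ)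
    (hμ : ∀ᶠ r in 𝓝[>] (0 : ℝ), μ (Metric.closedBall (X t) r) ≤ ENNReal.ofReal (C * r ^ d))
    (hf : ∀ᶠ δ in 𝓝[>] (0 : ℝ), IsOccupationDensity volume (Icc t (t + δ)) X μ (f δ))
    {α : ℝ} (hα : 1 - d * γ < α) :
    Tendsto (fun δ => (⨆ x, ENNReal.ofReal (f δ x)) / ENNReal.ofReal (δ ^ α)) (𝓝[>] 0) (𝓝 ⊤) :=
  tendsto_div_ofReal_rpow_nhds_top (mul_pos hC (Real.rpow_pos_of_pos hG d))
    (eventually_ofReal_le_iSup_occupationDensity_mul hγ hG hX hμ hf) hα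

end HolderAtPoint

/-- Deterministic upper bound on the time-Hölder exponent of an occupation density:
if `X` is `γ`-Hölder on `[0,T]` with constant `G`, `t ∈ [0,T)`, and for each
`δ ∈ (0, T-t]` the function `x ↦ L(t+δ,x) - L(t,x)` is an occupation density of `X`
on `[t, t+δ]`, then for every `α > 1 - γ`,
`limsup_{δ↓0} sup_x (L(t+δ,x) - L(t,x)) / δ^α = ∞`. -/
theorem stmt_8 (T γ G : ℝ) (hT : 0 < T) (hγ0 : 0 < γ) (hγ1 : γ < 1) (hG : 0 < G)
    (X : ℝ → ℝ)
    (hX : ∀ s ∈ Icc (0 : ℝ) T, ∀ u ∈ Icc (0 : ℝ) T, |X u - X s| ≤ G * |u - s| ^ γ)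
    (t : ℝ) (ht : t ∈ Ico (0 : ℝ) T)
    (L : ℝ → ℝ → ℝ) (hL0 : ∀ r x, 0 ≤ L r x)
    (hocc : ∀ δ : ℝ, 0 < δ → δ ≤ T - t → ∀ A : Set ℝ, MeasurableSet A →
      ∫ x in A, (L (t + δ) x - L t x) =
        (volume {s ∈ Icc t (t + δ) | X s ∈ A}).toReal)
    (α : ℝ) (hα : 1 - γ < α) :
    Filter.limsup
      (fun δ : ℝ =>
        (⨆ x : ℝ, ENNReal.ofReal (L (t + δ) x - L t x)) / ENNReal.ofReal (δ ^ α))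
      (𝓝[>] (0 : ℝ)) = ⊤ := by
  have holder_at : ∀ᶠ s in 𝓝[>] t, dist (X s) (X t) ≤ G * (s - t) ^ γ := by
    filter_upwards [Ioc_mem_nhdsGT ht.2] with s hs
    simpa only [Real.dist_eq, abs_of_pos (sub_pos.2 hs.1)] using
      hX t (Ico_subset_Icc_self ht) s ⟨ht.1.trans hs.1.le, hs.2⟩
  have volume_ball : ∀ᶠ r in 𝓝[>] (0 : ℝ),
      volume (Metric.closedBall (X t) r) ≤ ENNReal.ofReal (2 * r ^ (1 : ℝ)) :=
    .of_forall fun r => by rw [Real.volume_closedBall, Real.rpow_one]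
  have occupation : ∀ᶠ δ in 𝓝[>] (0 : ℝ),
      IsOccupationDensity volume (Icc t (t + δ)) X volume fun x => L (t + δ) x - L t x := by
    filter_upwards [Ioc_mem_nhdsGT (sub_pos.2 ht.2)] with δ hδ using hocc δ hδ.1 hδ.2
  exact (stmt_8_general hγ0 hG two_pos holder_at volume_ball occupation
    (by rwa [one_mul])).limsup_eq
end

section
/- Let f : ℝ → [0, ∞) be a Borel measurable function, let s ≤ t be real numbers, and let n ≥ 1 be an integer. Then ( ∫_s^t f(u) du )^n = n! ∫_{s ≤ u₁ ≤ u₂ ≤ ⋯ ≤ u_n ≤ t} f(u₁) f(u₂) ⋯ f(u_n) du₁ ⋯ du_n. -/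
open MeasureTheory Set
open scoped ENNReal

/-!
The `n!` sets `{u | Monotone (u ∘ σ)}`, one for each permutation `σ` of the coordinates, cover the
whole product space because every tuple can be sorted. Two of them meet only in tuples with a
repeated entry, a null set for the power of a measure without point masses. Permuting coordinates
preserves this power, so a symmetric function has the same integral over each of the sets. For the
symmetric function `u ↦ ∏ i, f (u i)`, Tonelli's theorem evaluates the integral over the whole
space.
-/

lemma lintegral_fin_nat_prod_eq_prod {n : ℕ} {E : Fin n → Type*} [∀ i, MeasurableSpace (E i)]
    {μ : ∀ i, Measure (E i)} [∀ i, SigmaFinite (μ i)] {f : ∀ i, E i → ℝ≥0∞}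
    (hf : ∀ i, AEMeasurable (f i) (μ i)) :
    ∫⁻ u, ∏ i, f i (u i) ∂Measure.pi μ = ∏ i, ∫⁻ x, f i x ∂μ i := by
  induction n with
  | zero => simp
  | succ n ih =>
    have tail_aemeasurable : AEMeasurable (fun v : ∀ i : Fin n, E i.succ ↦ ∏ i, f i.succ (v i))
        (Measure.pi fun i : Fin n ↦ μ i.succ) :=
      Finset.univ.aemeasurable_fun_prod fun i _ ↦ (hf i.succ).comp_quasiMeasurePreserving
        (Measure.quasiMeasurePreserving_eval (fun i : Fin n ↦ μ i.succ) i)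
    calc
      ∫⁻ u, ∏ i, f i (u i) ∂Measure.pi μ
      _ = ∫⁻ z, f 0 z.1 * ∏ i : Fin n, f i.succ (z.2 i)
            ∂(μ 0).prod (Measure.pi fun i : Fin n ↦ μ i.succ) := by
          simp_rw [Fin.prod_univ_succ]
          exact (measurePreserving_piFinSuccAbove μ 0).lintegral_comp_emb
            (MeasurableEquiv.measurableEmbedding _) fun z ↦ f 0 z.1 * ∏ i, f (Fin.succ i) (z.2 i)
      _ = (∫⁻ x, f 0 x ∂μ 0) * ∏ i : Fin n, ∫⁻ x, f i.succ x ∂μ i.succ := by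
          rw [lintegral_prod_mul (hf 0) tail_aemeasurable, ih fun i ↦ hf i.succ]
      _ = ∏ i, ∫⁻ x, f i x ∂μ i :=
          (Fin.prod_univ_succ fun i ↦ ∫⁻ x, f i x ∂μ i).symm

section Diagonal

variable {ι α : Type*} [Fintype ι] [MeasurableSpace α] [MeasurableEq α]
  (μ : Measure α) [SigmaFinite μ] [NullSingletonClass μ]

lemma ae_pi_eval_ne_eval {i j : ι} (hij : i ≠ j) :
    ∀ᵐ u ∂Measure.pi fun _ : ι ↦ μ, u i ≠ u j := by
  classical
  -- Once the `j`-th coordinate is fixed, `u i = u j` defines a null hyperplane in the others.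
  have split_coord := measurePreserving_piEquivPiSubtypeProd (fun _ : ι ↦ μ) (· = j)
  refine split_coord.quasiMeasurePreserving.ae (p := fun z ↦ z.2 ⟨i, hij⟩ ≠ z.1 ⟨j, rfl⟩) ?_
  refine (Measure.ae_prod_iff_ae_ae ?_).2 <| .of_forall fun _ ↦ Measure.ae_eval_ne _ _ _
  exact (measurableSet_eq_fun (by fun_prop) (by fun_prop)).compl

lemma ae_pi_injective : ∀ᵐ u ∂Measure.pi fun _ : ι ↦ μ, Function.Injective u := by
  have ne_of_ne : ∀ᵐ u ∂Measure.pi fun _ : ι ↦ μ, ∀ i j, i ≠ j → u i ≠ u j :=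
    ae_all_iff.2 fun _ ↦ ae_all_iff.2 fun _ ↦
      Filter.eventually_imp_distrib_left.2 (ae_pi_eval_ne_eval μ)
  filter_upwards [ne_of_ne] with u hu i j
  exact not_imp_not.1 (hu i j)

end Diagonal

lemma iUnion_setOf_monotone_comp_perm {α : Type*} [LinearOrder α] (n : ℕ) :
    ⋃ σ : Equiv.Perm (Fin n), {u : Fin n → α | Monotone (u ∘ σ)} = univ :=
  iUnion_eq_univ_iff.2 fun u ↦ ⟨Tuple.sort u, Tuple.monotone_sort u⟩

lemma perm_eq_of_monotone_comp {α : Type*} [PartialOrder α] {n : ℕ} {u : Fin n → α}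
    (hu : Function.Injective u) {σ τ : Equiv.Perm (Fin n)}
    (hσ : Monotone (u ∘ σ)) (hτ : Monotone (u ∘ τ)) : σ = τ :=
  DFunLike.coe_injective <| hu.comp_left <| Tuple.unique_monotone hσ hτ

lemma pairwise_aedisjoint_setOf_monotone_comp_perm {α : Type*} [PartialOrder α]
    [MeasurableSpace α] [MeasurableEq α] (μ : Measure α) [SigmaFinite μ] [NullSingletonClass μ]
    (n : ℕ) :
    Pairwise (Function.onFun (AEDisjoint (Measure.pi fun _ : Fin n ↦ μ))
      fun σ : Equiv.Perm (Fin n) ↦ {u : Fin n → α | Monotone (u ∘ σ)}) := by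
  intro σ τ hστ
  refine measure_mono_null ?_ (ae_iff.1 (ae_pi_injective μ))
  rintro u ⟨hσ, hτ⟩ hu
  exact hστ (perm_eq_of_monotone_comp hu hσ hτ)

lemma setLIntegral_comp_equiv {ι ι' α : Type*} [Fintype ι] [Fintype ι'] [MeasurableSpace α]
    (μ : Measure α) [SigmaFinite μ] (e : ι ≃ ι') (F : (ι → α) → ℝ≥0∞) (S : Set (ι → α)) :
    ∫⁻ u in {u | u ∘ e ∈ S}, F (u ∘ e) ∂Measure.pi (fun _ : ι' ↦ μ) =
      ∫⁻ u in S, F u ∂Measure.pi fun _ : ι ↦ μ :=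
  (measurePreserving_arrowCongr' (fun _ ↦ μ) (fun _ ↦ μ) e.symm (.refl α)
    fun _ ↦ .id μ).setLIntegral_comp_preimage_emb (MeasurableEquiv.measurableEmbedding _) F S

lemma restrict_pi_setOf_monotone_and_mem {ι α : Type*} [Fintype ι] [Preorder ι] [Preorder α]
    [TopologicalSpace α] [OrderClosedTopology α] [SecondCountableTopology α] [MeasurableSpace α]
    [OpensMeasurableSpace α] (μ : Measure α) [SigmaFinite μ] (A : Set α) :
    (Measure.pi fun _ : ι ↦ μ).restrict {u | Monotone u ∧ ∀ i, u i ∈ A} =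
      (Measure.pi fun _ : ι ↦ μ.restrict A).restrict {u | Monotone u} := by
  rw [← Measure.restrict_pi_pi, Measure.restrict_restrict isClosed_monotone.measurableSet]
  congr 1
  ext u
  simp

section Symmetrization

variable {α : Type*} [LinearOrder α] [TopologicalSpace α] [OrderClosedTopology α]
  [SecondCountableTopology α] [MeasurableSpace α] [OpensMeasurableSpace α]
  (μ : Measure α) [SigmaFinite μ] [NullSingletonClass μ] {n : ℕ}

lemma lintegral_pi_eq_factorial_mul_setLIntegral_monotone {F : (Fin n → α) → ℝ≥0∞}
    (hF : ∀ (σ : Equiv.Perm (Fin n)) u, F (u ∘ σ) = F u) :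
    ∫⁻ u, F u ∂Measure.pi (fun _ ↦ μ) =
      (n.factorial : ℝ≥0∞) * ∫⁻ u in {u | Monotone u}, F u ∂Measure.pi fun _ ↦ μ := by
  have measurableSet_cell (σ : Equiv.Perm (Fin n)) :
      MeasurableSet {u : Fin n → α | Monotone (u ∘ σ)} :=
    isClosed_monotone.measurableSet.preimage (by fun_prop : Measurable fun u : Fin n → α ↦ u ∘ σ)
  calc
    ∫⁻ u, F u ∂Measure.pi (fun _ ↦ μ)
    _ = ∑ σ : Equiv.Perm (Fin n), ∫⁻ u in {u | Monotone (u ∘ σ)}, F u ∂Measure.pi fun _ ↦ μ := by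
        rw [← setLIntegral_univ, ← iUnion_setOf_monotone_comp_perm,
          lintegral_iUnion₀ (fun σ ↦ (measurableSet_cell σ).nullMeasurableSet)
            (pairwise_aedisjoint_setOf_monotone_comp_perm μ n), tsum_fintype]
    _ = ∑ _σ : Equiv.Perm (Fin n), ∫⁻ u in {u | Monotone u}, F u ∂Measure.pi fun _ ↦ μ := by
        refine Finset.sum_congr rfl fun σ _ ↦ ?_
        simpa only [hF, mem_ofPred_eq] using setLIntegral_comp_equiv μ σ F {u | Monotone u}
    _ = (n.factorial : ℝ≥0∞) * ∫⁻ u in {u | Monotone u}, F u ∂Measure.pi fun _ ↦ μ := by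
        simp [Fintype.card_perm]

theorem stmt_9_general {A : Set α} {f : α → ℝ≥0∞} (hf : AEMeasurable f (μ.restrict A)) :
    (∫⁻ x in A, f x ∂μ) ^ n =
      (n.factorial : ℝ≥0∞) *
        ∫⁻ u in {u : Fin n → α | Monotone u ∧ ∀ i, u i ∈ A},
          ∏ i, f (u i) ∂Measure.pi fun _ ↦ μ := by
  rw [restrict_pi_setOf_monotone_and_mem,
    ← lintegral_pi_eq_factorial_mul_setLIntegral_monotone (μ.restrict A)
      (F := fun u ↦ ∏ i, f (u i)) fun σ u ↦ Equiv.prod_comp σ fun i ↦ f (u i),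
    lintegral_fin_nat_prod_eq_prod fun _ ↦ hf, Finset.prod_const, Finset.card_fin]

end Symmetrization

/-- Symmetrization identity: for a nonnegative Borel function `f` and `s ≤ t`,
`(∫_s^t f)^n = n! ∫_{s ≤ u₁ ≤ ⋯ ≤ u_n ≤ t} f(u₁)⋯f(u_n) du`. Both sides may be `+∞`
simultaneously, so the identity is stated with lower integrals. -/
theorem stmt_9 (f : ℝ → ℝ) (hf : Measurable f) (hf0 : ∀ x, 0 ≤ f x)
    (s t : ℝ) (hst : s ≤ t) (n : ℕ) (hn : 1 ≤ n) :
    (∫⁻ u in Icc s t, ENNReal.ofReal (f u)) ^ n =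
      (n.factorial : ℝ≥0∞) *
        ∫⁻ u in {u : Fin n → ℝ | Monotone u ∧ ∀ i, u i ∈ Icc s t},
          ENNReal.ofReal (∏ i, f (u i)) := by
  simp_rw [ENNReal.ofReal_prod_of_nonneg fun _ _ ↦ hf0 _]
  exact stmt_9_general volume hf.ennreal_ofReal.aemeasurable
end
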